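/- arXiv:2006.07850 — 5 statements merged into one kernel-verified Lean document; each statement's English description precedes it below -/
import Mathlib

section
/- Let X be an infinite-dimensional complex Banach space and let T = α·I + S, where α ∈ ℂ, S : X → X is a bounded linear operator, and S^k is a compact operator for some k ≥ 1. Then: σ(T) is a countable set; α ∈ σ(T); every λ ∈ σ(T) with λ ≠ α is an isolated point of σ(T) (so α is the only possible accumulation point of σ(T)); and every λ ∈ σ(T) with λ ≠ α is an eigenvalue of T whose eigenspace ker(λ·I − T) is finite-dimensional. -/
open Module End in
theorem aux_finite {X : Type*} [NormedAddCommGroup X]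
    [NormedSpace ℂ X] [CompleteSpace X] (K : X →L[ℂ] X) (hK : IsCompactOperator K)
    (ε : ℝ) (hε : 0 < ε) : {z ∈ spectrum ℂ K | ε ≤ ‖z‖}.Finite := by
  by_contra hinf
  have hinf : {z ∈ spectrum ℂ K | ε ≤ ‖z‖}.Infinite := hinf
  let f := hinf.natEmbedding
  let g : ℕ → ℂ := fun n => (f n : ℂ)
  have hginj : Function.Injective g := fun a b h => f.injective (Subtype.ext h)
  have hgs : ∀ n, g n ∈ spectrum ℂ K := fun n => (f n).2.1
  have hge : ∀ n, ε ≤ ‖g n‖ := fun n => (f n).2.2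
  have hg0 : ∀ n, g n ≠ 0 := fun n h => by
    have := hge n
    rw [h, norm_zero] at this
    linarith
  have hev : ∀ n, ∃ x, HasEigenvector (K : End ℂ X) (g n) x := fun n =>
    ((hK.hasEigenvalue_iff_mem_spectrum (hg0 n)).2 (hgs n)).exists_hasEigenvector
  choose x hx using hev
  have hli : LinearIndependent ℂ x :=
    Module.End.eigenvectors_linearIndependent' (K : End ℂ X) g hginj x hx
  have hKx : ∀ n, K (x n) = g n • x n := fun n => (hx n).apply_eq_smul
  let V : ℕ → Submodule ℂ X := fun n => Submodule.span ℂ (x '' Set.Iio n)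
  have hVmono : Monotone V := fun a b h =>
    Submodule.span_mono (Set.image_mono (Set.Iio_subset_Iio h))
  have hVclosed : ∀ n, IsClosed (V n : Set X) := fun n => by
    have : FiniteDimensional ℂ (V n) :=
      FiniteDimensional.span_of_finite ℂ ((Set.finite_Iio n).image x)
    exact (V n).closed_of_finiteDimensional
  have hsub : ∀ n, ∀ v ∈ V (n+1), K v - g n • v ∈ V n := by
    intro n v hv
    have hle : V (n+1) ≤ (V n).comap ((K - g n • (1 : X →L[ℂ] X) : X →L[ℂ] X) : X →ₗ[ℂ] X) := by
      refine Submodule.span_le.2 ?_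
      rintro _ ⟨i, hi, rfl⟩
      have hi : i < n + 1 := hi
      have e : (K - g n • (1 : X →L[ℂ] X) : X →L[ℂ] X) (x i) = (g i - g n) • x i := by
        simp [hKx, sub_smul]
      change (K - g n • (1 : X →L[ℂ] X) : X →L[ℂ] X) (x i) ∈ V n
      rw [e]
      rcases Nat.lt_succ_iff_lt_or_eq.1 hi with h | h
      · exact (V n).smul_mem _ (Submodule.subset_span ⟨i, h, rfl⟩)
      · simp [h]
    have := hle hv
    simpa using this
  have hy : ∀ n, ∃ y ∈ V (n+1), ‖y‖ ≤ 3 ∧ ∀ v ∈ V n, 1 ≤ ‖y - v‖ := by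
    intro n
    have h₁ : IsClosed ((V n).comap (V (n+1)).subtype : Set (V (n+1))) :=
      (hVclosed n).preimage continuous_subtype_val
    have h₂ : ∃ z : V (n+1), z ∉ (V n).comap (V (n+1)).subtype := by
      refine ⟨⟨x n, Submodule.subset_span ⟨n, Nat.lt_succ_self n, rfl⟩⟩, ?_⟩
      intro h
      exact hli.notMem_span_image (s := Set.Iio n) (x := n) (by simp) h
    obtain ⟨⟨y, hyV⟩, hyn, hyd⟩ := riesz_lemma_of_norm_lt (c := (2:ℂ)) (by norm_num)
      (R := 3) (by norm_num) h₁ h₂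
    exact ⟨y, hyV, hyn, fun v hv => hyd ⟨v, hVmono (Nat.le_succ n) hv⟩ hv⟩
  choose y hyV hyn hyd using hy
  have hsep : ∀ m n, m < n → ε ≤ ‖K (y n) - K (y m)‖ := by
    intro m n hmn
    have hKm : K (y m) ∈ V n := by
      have h1 := hVmono (show m ≤ n from hmn.le) (hsub m _ (hyV m))
      have h2 := (V n).smul_mem (g m) (hVmono (show m + 1 ≤ n from hmn) (hyV m))
      simpa using (V n).add_mem h1 h2
    have hu := (V n).smul_mem (g n)⁻¹ ((V n).sub_mem hKm (hsub n _ (hyV n)))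
    have e : K (y n) - K (y m) =
        g n • (y n - (g n)⁻¹ • (K (y m) - (K (y n) - g n • y n))) := by
      rw [smul_sub, smul_inv_smul₀ (hg0 n)]
      abel
    rw [e, norm_smul]
    have := hyd n _ hu
    nlinarith [hge n]
  obtain ⟨C, hC, hC'⟩ := hK.image_closedBall_subset_compact (f := (K : X →ₗ[ℂ] X)) 3
  obtain ⟨z, -, ψ, hψ, hψy⟩ := hC.tendsto_subseq (x := fun n => K (y n))
    (fun n => hC' ⟨y n, by simpa using hyn n, rfl⟩)
  obtain ⟨N, hN⟩ := Metric.cauchySeq_iff'.1 hψy.cauchySeq ε hε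
  have h1 := hN (N+1) (Nat.le_succ N)
  rw [dist_eq_norm] at h1
  exact absurd h1 (not_lt.2 (hsep _ _ (hψ (Nat.lt_succ_self N))))

theorem aux_finite_pow {X : Type*} [NormedAddCommGroup X]
    [NormedSpace ℂ X] [CompleteSpace X] (S : X →L[ℂ] X) (k : ℕ) (hk : 1 ≤ k)
    (hS : IsCompactOperator (S ^ k : X →L[ℂ] X))
    (ε : ℝ) (hε : 0 < ε) : {z ∈ spectrum ℂ S | ε ≤ ‖z‖}.Finite := by
  have h := aux_finite (S ^ k) hS (ε ^ k) (by positivity)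
  refine Set.Finite.subset (h.preimage' (f := fun z : ℂ => z ^ k) ?_) ?_
  · intro b _
    have : (fun z : ℂ => z ^ k) ⁻¹' {b} = ((Polynomial.nthRoots k b).toFinset : Set ℂ) := by
      ext z
      simp [Polynomial.mem_nthRoots (show 0 < k from hk)]
    rw [this]
    exact Finset.finite_toSet _
  · rintro z ⟨hz, hze⟩
    refine ⟨spectrum.pow_mem_pow S k hz, ?_⟩
    rw [norm_pow]
    gcongr

theorem aux_countable {X : Type*} [NormedAddCommGroup X]
    [NormedSpace ℂ X] [CompleteSpace X] (S : X →L[ℂ] X) (k : ℕ) (hk : 1 ≤ k)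
    (hS : IsCompactOperator (S ^ k : X →L[ℂ] X)) : (spectrum ℂ S).Countable := by
  have h : spectrum ℂ S ⊆ {0} ∪ ⋃ n : ℕ, {z ∈ spectrum ℂ S | 1 / ((n : ℝ) + 1) ≤ ‖z‖} := by
    intro z hz
    by_cases h0 : z = 0
    · left; exact h0
    · right
      obtain ⟨n, hn⟩ := exists_nat_one_div_lt (norm_pos_iff.2 h0)
      exact Set.mem_iUnion.2 ⟨n, hz, hn.le⟩
  refine Set.Countable.mono h ((Set.countable_singleton 0).union (Set.countable_iUnion fun n => ?_))
  exact (aux_finite_pow S k hk hS _ (by positivity)).countable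

theorem aux_findim {X : Type*} [NormedAddCommGroup X]
    [NormedSpace ℂ X] [CompleteSpace X] (K : X →L[ℂ] X) (hK : IsCompactOperator K)
    (μ : ℂ) (hμ : μ ≠ 0) (E : Submodule ℂ X) (hE : IsClosed (E : Set X))
    (h : ∀ x ∈ E, K x = μ • x) : FiniteDimensional ℂ E := by
  have h1 := IsCompactOperator.restrict (f := (K : X →ₗ[ℂ] X)) hK (V := E)
    (fun v hv => by
      change K v ∈ E
      rw [h v hv]
      exact E.smul_mem _ hv) hE
  have h2 := h1.smul μ⁻¹
  apply FiniteDimensional.of_isCompactOperator_id (𝕜 := ℂ)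
  have e : (id : E → E) = μ⁻¹ • ⇑((K : X →ₗ[ℂ] X).restrict (p := E) (q := E) (fun v hv => by
      change K v ∈ E
      rw [h v hv]
      exact E.smul_mem _ hv)) := by
    funext ⟨v, hv⟩
    apply Subtype.ext
    change v = μ⁻¹ • K v
    rw [h v hv, inv_smul_smul₀ hμ]
  rw [e]
  exact h2

open Polynomial in
theorem aux_eigen {Y : Type*} [NormedAddCommGroup Y]
    [NormedSpace ℂ Y] [CompleteSpace Y] (S : Y →L[ℂ] Y) (k : ℕ) (hk : 1 ≤ k)
    (hS : IsCompactOperator (S ^ k : Y →L[ℂ] Y)) (l : ℂ) (hl : l ∈ spectrum ℂ S) (hl0 : l ≠ 0) :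
    ∃ x : Y, x ≠ 0 ∧ S x = l • x := by
  -- choose the auxiliary constant
  obtain ⟨c, hc⟩ : ∃ c : ℂ, c ∉ ((fun z => (z^(k+1) - l^(k+1)) / (z^k - l^k)) '' spectrum ℂ S) ∪
      {l, (k+1) * l / k} := by
    by_contra! hcon
    have : (Set.univ : Set ℂ).Countable := by
      refine Set.Countable.mono (fun c _ => hcon c)
        (((aux_countable S k hk hS).image _).union (Set.Finite.countable (by simp)))
    exact not_countable_complex this
  simp only [Set.mem_union, Set.mem_image, Set.mem_insert_iff, Set.mem_singleton_iff, not_or,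
    not_exists, not_and] at hc
  obtain ⟨hc1, hc2, hc3⟩ := hc
  let g : ℂ[X] := X ^ k * (X - C c)
  have hgl : g.eval l ≠ 0 := by
    simp [g, hl0, sub_eq_zero, Ne.symm hc2]
  obtain ⟨q, hq⟩ : (X - C l) ∣ g - C (g.eval l) := X_sub_C_dvd_sub_C_eval
  -- q has no zero in the spectrum
  have hqz : ∀ z ∈ spectrum ℂ S, q.eval z ≠ 0 := by
    intro z hz h0
    have hk0 : (k : ℂ) ≠ 0 := by exact_mod_cast (by omega : k ≠ 0)
    by_cases hzl : z = l
    · subst hzl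
      have hd := congrArg (fun p => (derivative p).eval z) hq
      simp only [derivative_sub, derivative_C, sub_zero, derivative_mul, eval_add, eval_mul,
        derivative_X, eval_one, h0, eval_sub, eval_X, eval_C, sub_self, zero_mul, mul_zero,
        add_zero, g, derivative_X_pow, eval_pow, mul_one] at hd
      obtain ⟨j, rfl⟩ : ∃ j, k = j + 1 := ⟨k - 1, by omega⟩
      simp only [Nat.add_sub_cancel, pow_succ] at hd
      apply hc3
      have hz : z ^ j ≠ 0 := pow_ne_zero _ hl0
      rw [eq_div_iff hk0]
      apply mul_left_cancel₀ hz
      push_cast at hd ⊢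
      linear_combination -hd
    · have he := congrArg (fun p => p.eval z) hq
      simp [g, h0] at he
      have he' : z ^ (k+1) - l^(k+1) = c * (z^k - l^k) := by
        linear_combination he
      by_cases hzk : z ^ k - l ^ k = 0
      · rw [hzk, mul_zero] at he'
        have : l ^ k * (z - l) = 0 := by linear_combination he' - z * hzk
        rcases mul_eq_zero.1 this with h | h
        · exact pow_ne_zero _ hl0 h
        · exact hzl (sub_eq_zero.1 h)
      · exact hc1 z hz ((div_eq_iff hzk).2 he')
  have hqu : IsUnit (aeval S q) := by
    rw [← spectrum.zero_notMem_iff ℂ, spectrum.map_polynomial_aeval_of_nonempty S q ⟨l, hl⟩]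
    rintro ⟨z, hz, h0⟩
    exact hqz z hz h0
  have hgS : aeval S g = (S - c • (1 : Y →L[ℂ] Y)) * S ^ k := by
    rw [show g = (X - C c) * X ^ k from mul_comm _ _]
    simp [Algebra.algebraMap_eq_smul_one]
  have hgc : IsCompactOperator (aeval S g : Y →L[ℂ] Y) := by
    rw [hgS]
    exact hS.clm_comp (S - c • (1 : Y →L[ℂ] Y))
  have hmem : g.eval l ∈ spectrum ℂ (aeval S g) := by
    rw [spectrum.map_polynomial_aeval_of_nonempty S g ⟨l, hl⟩]
    exact ⟨l, hl, rfl⟩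
  obtain ⟨x, hx⟩ := ((hgc.hasEigenvalue_iff_mem_spectrum hgl).2 hmem).exists_hasEigenvector
  have hx1 : (aeval S g) x = g.eval l • x := hx.apply_eq_smul
  have hx0 := hx.2
  refine ⟨aeval S q x, ?_, ?_⟩
  · intro h
    apply hx0
    have hb := (ContinuousLinearMap.isUnit_iff_bijective.1 hqu).1
    exact hb (by rw [h, map_zero])
  · have e := congrArg (fun p => (aeval S p) x) hq
    simp [Algebra.algebraMap_eq_smul_one, hx1] at e
    exact (sub_eq_zero.1 e.symm)

/-- Let `X` be an infinite-dimensional complex Banach space and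
`T = α·I + S` with `S^k` compact for some `k ≥ 1`. Then `σ(T)` is countable,
`α ∈ σ(T)`, every `λ ≠ α` in `σ(T)` is an isolated point of `σ(T)`, and every
`λ ≠ α` in `σ(T)` is an eigenvalue of `T` with finite-dimensional eigenspace. -/
theorem spectrum_scalar_plus_compact_power {X : Type*} [NormedAddCommGroup X]
    [NormedSpace ℂ X] [CompleteSpace X] (hX : ¬ FiniteDimensional ℂ X)
    (α : ℂ) (S : X →L[ℂ] X) (k : ℕ) (hk : 1 ≤ k)
    (hS : IsCompactOperator (S ^ k : X →L[ℂ] X))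
    (T : X →L[ℂ] X) (hT : T = α • (1 : X →L[ℂ] X) + S) :
    (spectrum ℂ T).Countable ∧
    α ∈ spectrum ℂ T ∧
    (∀ lam ∈ spectrum ℂ T, lam ≠ α →
      ∃ U ∈ nhds lam, ∀ μ ∈ spectrum ℂ T, μ ∈ U → μ = lam) ∧
    (∀ lam ∈ spectrum ℂ T, lam ≠ α →
      (∃ x : X, x ≠ 0 ∧ T x = lam • x) ∧
      FiniteDimensional ℂ (LinearMap.ker (lam • (1 : X →L[ℂ] X) - T).toLinearMap)) := by
  have hmem : ∀ z, z ∈ spectrum ℂ T ↔ z - α ∈ spectrum ℂ S := by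
    intro z
    rw [spectrum.mem_iff, spectrum.mem_iff, hT]
    have : algebraMap ℂ (X →L[ℂ] X) z - (α • (1 : X →L[ℂ] X) + S) =
        algebraMap ℂ (X →L[ℂ] X) (z - α) - S := by
      rw [map_sub, Algebra.algebraMap_eq_smul_one α]
      abel
    rw [this]
  refine ⟨?_, ?_, ?_, ?_⟩
  · refine Set.Countable.mono (fun z hz => ?_) ((aux_countable S k hk hS).image (fun z => z + α))
    exact ⟨z - α, (hmem z).1 hz, by simp⟩
  · rw [hmem, sub_self, spectrum.zero_mem_iff]
    intro hu
    apply hX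
    obtain ⟨u, hu'⟩ := hu.pow k
    apply FiniteDimensional.of_isCompactOperator_id (𝕜 := ℂ)
    have h := hS.clm_comp ((u⁻¹ : (X →L[ℂ] X)ˣ) : X →L[ℂ] X)
    have e : (id : X → X) = ((u⁻¹ : (X →L[ℂ] X)ˣ) : X →L[ℂ] X) ∘ (S ^ k : X →L[ℂ] X) := by
     funext x
     have h2 := congrArg (fun A : X →L[ℂ] X => A x) u.inv_mul
     rw [hu'] at h2
     exact h2.symm
    rw [e]
    exact h
  · intro l hl hla
    have hpos : 0 < ‖l - α‖ := norm_pos_iff.2 (sub_ne_zero.2 hla)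
    have hfin := aux_finite_pow S k hk hS (‖l - α‖ / 2) (by positivity)
    have hfin' := (hfin.image (fun z => z + α)).subset (s := _) (Set.diff_subset (t := {l}))
    refine ⟨_, Filter.inter_mem (hfin'.isClosed.isOpen_compl.mem_nhds
      (show l ∉ _ from fun h => h.2 rfl)) (Metric.ball_mem_nhds l (half_pos hpos)), ?_⟩
    rintro μ hμ ⟨h1, h2⟩
    by_contra hne
    apply h1
    refine ⟨⟨μ - α, ⟨(hmem μ).1 hμ, ?_⟩, by simp⟩, hne⟩
    rw [Metric.mem_ball, dist_comm, dist_eq_norm] at h2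
    have h3 := norm_add_le (l - μ) (μ - α)
    rw [sub_add_sub_cancel] at h3
    linarith
  · intro l hl hla
    have h0 : l - α ≠ 0 := sub_ne_zero.2 hla
    constructor
    · obtain ⟨x, hx, hSx⟩ := aux_eigen S k hk hS _ ((hmem l).1 hl) h0
      refine ⟨x, hx, ?_⟩
      rw [hT]
      simp [hSx, sub_smul]
    · refine aux_findim (S ^ k) hS ((l - α) ^ k) (pow_ne_zero _ h0) _
        ((l • (1 : X →L[ℂ] X) - T).isClosed_ker) ?_
      intro x hx
      have hx' : l • x - T x = 0 := by simpa using hx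
      have hSx : S x = (l - α) • x := by
        have : T x = α • x + S x := by simp [hT]
        rw [this] at hx'
        rw [sub_smul]
        exact (sub_eq_zero.1 (by rw [← hx']; abel)).symm
      clear hS hk
      induction k with
      | zero => simp
      | succ n ih =>
        rw [pow_succ, ContinuousLinearMap.mul_apply, hSx, map_smul, ih, smul_smul, pow_succ, mul_comm]
end

section
/- Let T be a power-bounded operator on a complex Banach space X, and assume that σ(T) ∩ 𝕋 is countable, where 𝕋 = {λ ∈ ℂ : |λ| = 1}. Then for every x ∈ X the following are equivalent: (i) there exists a strictly increasing sequence of natural numbers (n_j) such that T^{n_j} x → 0 weakly, i.e., ⟨x*, T^{n_j} x⟩ → 0 for every x* ∈ X*; (ii) (1/n) ∑_{k=1}^n |⟨x*, T^k x⟩| → 0 as n → ∞, for every x* ∈ X*; (iii) ‖Tⁿ x‖ → 0 as n → ∞. -/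
open Filter Finset

lemma aux_isolated (S : Set ℂ) (hS : IsClosed S) (hc : S.Countable) (hne : S.Nonempty) :
    ∃ l ∈ S, ∃ ρ > 0, ∀ z ∈ S, z ≠ l → ρ ≤ dist z l := by
  by_contra hcon
  push Not at hcon
  have hP : Perfect S := by
    refine ⟨hS, preperfect_iff_nhds.2 (fun l hl U hU => ?_)⟩
    obtain ⟨ε, hε, hb⟩ := Metric.mem_nhds_iff.1 hU
    obtain ⟨z, hz, hzl, hd⟩ := hcon l hl ε hε
    exact ⟨z, ⟨hb hd, hz⟩, hzl⟩
  obtain ⟨f, hf, -, hinj⟩ := hP.exists_nat_bool_injection hne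
  have h1 : (Set.range f).Countable := hc.mono hf
  have h2 : Countable (ℕ → Bool) := by
    have := h1.to_subtype
    exact (Set.rangeFactorization_injective.2 hinj).countable
  have h3 : Countable (Set ℕ) := by
    classical
    exact Function.Injective.countable (f := fun (s : Set ℕ) (n : ℕ) => decide (n ∈ s))
      (fun s t h => by ext n; simpa using congrFun h n)
  obtain ⟨g, hg⟩ := exists_surjective_nat (Set ℕ)
  exact Function.cantor_surjective g hg

lemma aux_max (f : ℂ → ℂ) (z₀ : ℂ) (r M : ℝ) (hr : 0 < r)
    (hf : ∀ z ∈ Metric.closedBall z₀ r, DifferentiableAt ℂ f z)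
    (hM : ∀ z, ‖z‖ ≠ 1 → ‖f z‖ * |‖z‖ - 1| ≤ M) :
    r * ‖z₀‖ * ‖f z₀‖ ≤ (‖z₀‖ + r + 1) * M := by
  set Q : ℂ → ℂ := fun z => z * (starRingEnd ℂ z₀) * (z - z₀) + r ^ 2 * z - (z - z₀) with hQ
  have hM0 : 0 ≤ M := le_trans (by positivity) (hM 0 (by simp))
  have hQc : ∀ z ∈ Metric.sphere z₀ r, ‖Q z‖ = r * |‖z‖ ^ 2 - 1| := by
    intro z hz
    have h1 : (z - z₀) * (starRingEnd ℂ (z - z₀)) = (r:ℂ) ^ 2 := by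
      rw [Complex.mul_conj']; rw [mem_sphere_iff_norm.1 hz]
    have h2 : Q z = (z - z₀) * ((‖z‖ ^ 2 - 1 : ℝ) : ℂ) := by
      push_cast
      rw [← Complex.mul_conj']
      simp only [hQ]
      rw [← h1, map_sub]
      ring
    rw [h2, norm_mul, mem_sphere_iff_norm.1 hz, Complex.norm_real, Real.norm_eq_abs]
  have hd : DiffContOnCl ℂ (fun z => Q z * f z) (Metric.ball z₀ r) := by
    apply DifferentiableOn.diffContOnCl
    rw [closure_ball _ hr.ne']
    intro z hz
    refine DifferentiableAt.differentiableWithinAt ?_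
    refine DifferentiableAt.mul ?_ (hf z hz)
    simp only [hQ]; fun_prop
  have key := Complex.norm_le_of_forall_mem_frontier_norm_le (C := r * ((‖z₀‖ + r + 1) * M))
    Metric.isBounded_ball hd ?_ (z := z₀) (subset_closure (Metric.mem_ball_self hr))
  · have : Q z₀ = r ^ 2 * z₀ := by simp [hQ]
    rw [norm_mul, this, norm_mul, norm_pow, Complex.norm_real, Real.norm_eq_abs, abs_of_pos hr] at key
    refine le_of_mul_le_mul_left ?_ hr
    linarith
  · rw [frontier_ball _ hr.ne']
    intro z hz
    rw [norm_mul, hQc z hz]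
    have hzn : ‖z‖ ≤ ‖z₀‖ + r := by
      have := norm_le_norm_add_norm_sub' z z₀
      rw [mem_sphere_iff_norm.1 hz] at this; exact this
    by_cases h : ‖z‖ = 1
    · rw [h]; simp; positivity
    · have h3 : |‖z‖ ^ 2 - 1| = (‖z‖ + 1) * |‖z‖ - 1| := by
        rw [show ‖z‖ ^ 2 - 1 = (‖z‖ + 1) * (‖z‖ - 1) by ring, abs_mul, abs_of_pos (by positivity)]
      rw [h3]
      calc r * ((‖z‖ + 1) * |‖z‖ - 1|) * ‖f z‖ = r * ((‖z‖ + 1) * (‖f z‖ * |‖z‖ - 1|)) := by ring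
        _ ≤ r * ((‖z₀‖ + r + 1) * M) := by
          gcongr
          exact hM z h

lemma aux_entire (G : ℂ → ℂ) (K : Set ℂ) (hK : IsClosed K) (hKc : K.Countable)
    (hK1 : ∀ z ∈ K, ‖z‖ = 1) (hG : ∀ z ∉ K, DifferentiableAt ℂ G z) (M : ℝ)
    (hM : ∀ z, ‖z‖ ≠ 1 → ‖G z‖ * |‖z‖ - 1| ≤ M)
    (hrad : ∀ l : ℂ, ‖l‖ = 1 → ∀ a : ℂ,
      Tendsto (fun r : ℝ => ((r : ℂ) - 1) * G (r * l)) (nhdsWithin 1 (Set.Ioi 1)) (nhds a) → a = 0) :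
    ∀ z ∉ K, G z = 0 := by
  have hdense : Dense Kᶜ := hKc.dense_compl ℂ
  have hnb : ∀ z, (nhdsWithin z Kᶜ).NeBot := fun z => mem_closure_iff_nhdsWithin_neBot.1 (hdense z)
  set H : ℂ → ℂ := fun z => limUnder (nhdsWithin z Kᶜ) G with hH
  -- if `g` continuous at `w` and agrees with `G` off `K` near `w`, then `H w = g w`
  have hHeq : ∀ (g : ℂ → ℂ) (w : ℂ), ContinuousAt g w → (∀ᶠ z in nhds w, z ∉ K → G z = g z) →
      H w = g w := by
    intro g w hg he
    have := hnb w
    refine Tendsto.limUnder_eq ?_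
    refine Tendsto.congr' ?_ (hg.tendsto.mono_left nhdsWithin_le_nhds)
    have := eventually_nhdsWithin_iff.2 he
    filter_upwards [this] with z hz using hz.symm
  have hHG : ∀ z ∉ K, H z = G z := fun z hz =>
    hHeq G z (hG z hz).continuousAt (Eventually.of_forall fun _ _ => rfl)
  set R : Set ℂ := {z | ∃ ρ > 0, ∃ g : ℂ → ℂ, (∀ w ∈ Metric.ball z ρ, DifferentiableAt ℂ g w) ∧
    ∀ w ∈ Metric.ball z ρ, w ∉ K → G w = g w} with hR
  have hHg : ∀ z ρ (g : ℂ → ℂ), (∀ w ∈ Metric.ball z ρ, DifferentiableAt ℂ g w) →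
      (∀ w ∈ Metric.ball z ρ, w ∉ K → G w = g w) → ∀ w ∈ Metric.ball z ρ, H w = g w := by
    intro z ρ g h1 h2 w hw
    refine hHeq g w (h1 w hw).continuousAt ?_
    filter_upwards [Metric.isOpen_ball.mem_nhds hw] with v hv using h2 v hv
  have hRopen : IsOpen R := by
    rw [Metric.isOpen_iff]
    rintro z ⟨ρ, hρ, g, h1, h2⟩
    refine ⟨ρ, hρ, fun w hw => ?_⟩
    obtain ⟨ε, hε, hb⟩ := Metric.isOpen_iff.1 Metric.isOpen_ball w hw
    exact ⟨ε, hε, g, fun v hv => h1 v (hb hv), fun v hv => h2 v (hb hv)⟩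
  have hHd : ∀ z ∈ R, DifferentiableAt ℂ H z := by
    rintro z ⟨ρ, hρ, g, h1, h2⟩
    refine (h1 z (Metric.mem_ball_self hρ)).congr_of_eventuallyEq ?_
    filter_upwards [Metric.ball_mem_nhds z hρ] with w hw using hHg z ρ g h1 h2 w hw
  have hKR : Kᶜ ⊆ R := by
    intro z hz
    obtain ⟨ε, hε, hb⟩ := Metric.isOpen_iff.1 hK.isOpen_compl z hz
    exact ⟨ε, hε, G, fun w hw => hG w (hb hw), fun _ _ _ => rfl⟩
  have hHM : ∀ z, ‖z‖ ≠ 1 → ‖H z‖ * |‖z‖ - 1| ≤ M := by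
    intro z hz
    rw [hHG z (fun h => hz (hK1 z h))]
    exact hM z hz
  have hM0 : 0 ≤ M := le_trans (by positivity) (hM 0 (by simp))
  have hRuniv : ∀ z, z ∈ R := by
    by_contra hcon
    push Not at hcon
    have hSK : Rᶜ ⊆ K := fun z hz => by
      by_contra h
      exact hz (hKR h)
    obtain ⟨l, hl, ρ, hρ, hiso⟩ := aux_isolated Rᶜ hRopen.isClosed_compl (hKc.mono hSK) hcon
    have hl1 : ‖l‖ = 1 := hK1 l (hSK hl)
    have hmem : ∀ z, dist z l < ρ → z ≠ l → z ∈ R := by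
      intro z hz hzl
      by_contra h
      exact absurd (hiso z h hzl) (not_le.2 hz)
    -- bound
    have hbd : ∀ z, dist z l < min (ρ / 2) (1 / 2) → z ≠ l → ‖(z - l) * H z‖ ≤ 12 * M := by
      intro z hz hzl
      have hz1 := lt_of_lt_of_le hz (min_le_left _ _)
      have hz2 := lt_of_lt_of_le hz (min_le_right _ _)
      have hpos : 0 < dist z l := dist_pos.2 hzl
      have := aux_max H z (dist z l / 2) M (by positivity) ?_ hHM
      · rw [norm_mul, ← dist_eq_norm]
        have hd : ‖z - l‖ = dist z l := (dist_eq_norm _ _).symm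
        have a1 : ‖z‖ ≤ 3 / 2 := by
          have := norm_le_norm_add_norm_sub' z l
          rw [hd] at this; linarith
        have a2 : 1 / 2 ≤ ‖z‖ := by
          have := norm_le_norm_add_norm_sub' l z
          rw [norm_sub_rev, hd] at this; linarith
        have a3 : dist z l / 2 * (1 / 2) * ‖H z‖ ≤ (3 / 2 + 1 / 4 + 1) * M := by
          refine le_trans ?_ (this.trans ?_)
          · refine mul_le_mul_of_nonneg_right ?_ (norm_nonneg _)
            exact mul_le_mul_of_nonneg_left a2 (by positivity)
          · exact mul_le_mul_of_nonneg_right (by linarith) hM0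
        nlinarith
      · intro w hw
        rw [Metric.mem_closedBall] at hw
        apply hHd
        apply hmem
        · have := dist_triangle w z l
          linarith
        · rintro rfl
          rw [dist_comm] at hw
          linarith
    set δ := min (ρ / 2) (1 / 2) with hδ
    have hδ0 : 0 < δ := by positivity
    have hδρ : δ < ρ := lt_of_le_of_lt (min_le_left _ _) (by linarith)
    have hev : ∀ᶠ z in nhdsWithin l {l}ᶜ, dist z l < δ ∧ z ≠ l := by
      filter_upwards [nhdsWithin_le_nhds (Metric.ball_mem_nhds l hδ0), self_mem_nhdsWithin]
        with z h1 h2 using ⟨h1, h2⟩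
    have hlim := Complex.tendsto_limUnder_of_differentiable_on_punctured_nhds_of_bounded_under
      (f := fun z => (z - l) * H z) (c := l) (by
        filter_upwards [hev] with z hz
        exact (differentiableAt_id.sub_const l).mul (hHd z (hmem z (hz.1.trans hδρ) hz.2))) (by
        refine ⟨12 * M, ?_⟩
        rw [eventually_map]
        filter_upwards [hev] with z hz
        simpa using hbd z hz.1 hz.2)
    set a := limUnder (nhdsWithin l {l}ᶜ) (fun z => (z - l) * H z) with ha
    have hl0 : l ≠ 0 := by rintro rfl; simp at hl1
    have htr : Tendsto (fun r : ℝ => (r : ℂ) * l) (nhdsWithin 1 (Set.Ioi 1)) (nhdsWithin l {l}ᶜ) := by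
      refine tendsto_nhdsWithin_iff.2 ⟨?_, ?_⟩
      · refine Tendsto.mono_left ?_ nhdsWithin_le_nhds
        have : Continuous (fun r : ℝ => (r : ℂ) * l) := by fun_prop
        simpa using this.tendsto 1
      · filter_upwards [self_mem_nhdsWithin] with r hr h
        have h' : (r : ℂ) * l = l := h
        have : (r : ℂ) = 1 := by
          apply mul_right_cancel₀ hl0; simpa using h'
        have hr1 : r = 1 := by exact_mod_cast this
        rw [hr1] at hr
        exact (Set.mem_Ioi.1 hr).ne rfl
    have hlr := hlim.comp htr
    have ha0 : a / l = 0 := by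
      apply hrad l hl1
      refine Tendsto.congr' ?_ (hlr.div_const l)
      filter_upwards [self_mem_nhdsWithin] with r hr
      have hr' : (1 : ℝ) < r := hr
      have hn : ‖(r : ℂ) * l‖ ≠ 1 := by
        rw [norm_mul, hl1, Complex.norm_real, Real.norm_eq_abs, abs_of_pos (by linarith)]
        linarith
      simp only [Function.comp]
      rw [hHG _ (fun h => hn (hK1 _ h))]
      field_simp
    have ha1 : a = 0 := by simpa [hl0] using ha0
    rw [ha1] at hlim
    have hfin := Complex.differentiableOn_update_limUnder_of_isLittleO (f := H)
      (s := Metric.ball l ρ) (c := l) (Metric.ball_mem_nhds l hρ) (by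
        intro z hz
        exact (hHd z (hmem z hz.1 hz.2)).differentiableWithinAt) (by
        rw [Asymptotics.isLittleO_iff_tendsto']
        · have h2 : Tendsto (fun z => (z - l) * H z - (z - l) * H l) (nhdsWithin l {l}ᶜ)
              (nhds (0 - (l - l) * H l)) := by
            refine hlim.sub (Tendsto.mono_left ?_ nhdsWithin_le_nhds)
            have : Continuous (fun z => (z - l) * H l) := by fun_prop
            exact this.tendsto l
          simp only [sub_self, zero_mul] at h2
          refine h2.congr fun z => ?_
          rw [div_inv_eq_mul]; ring
        · filter_upwards [self_mem_nhdsWithin] with z hz h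
          exact absurd (sub_eq_zero.1 (inv_eq_zero.1 h)) hz)
    apply hl
    refine ⟨ρ, hρ, _, fun w hw => hfin.differentiableAt (Metric.isOpen_ball.mem_nhds hw), ?_⟩
    intro w hw hwK
    have : w ≠ l := by rintro rfl; exact hwK (hSK hl)
    rw [Function.update_of_ne this, hHG w hwK]
  have hdiff : Differentiable ℂ H := fun z => hHd z (hRuniv z)
  have ht : Tendsto H (cocompact ℂ) (nhds 0) := by
    have h1 : Tendsto (fun z : ℂ => M / (‖z‖ - 1)) (cocompact ℂ) (nhds 0) := by
      refine Tendsto.div_atTop tendsto_const_nhds ?_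
      exact tendsto_atTop_add_const_right _ _ (tendsto_norm_cocompact_atTop)
    refine squeeze_zero_norm' ?_ h1
    filter_upwards [tendsto_norm_cocompact_atTop.eventually (eventually_gt_atTop (1:ℝ))] with z hz
    have := hHM z hz.ne'
    rw [abs_of_pos (by linarith)] at this
    rwa [le_div_iff₀ (by linarith)]
  intro z hz
  rw [← hHG z hz]
  exact hdiff.apply_eq_of_tendsto_cocompact z ht

lemma aux_alaoglu {X : Type*} [NormedAddCommGroup X] [NormedSpace ℂ X] {ι : Type*}
    (U : Ultrafilter ι) (φ : ι → StrongDual ℂ X) (C : ℝ) (h : ∀ᶠ i in (U : Filter ι), ‖φ i‖ ≤ C) :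
    ∃ ψ : StrongDual ℂ X, ‖ψ‖ ≤ C ∧
      ∀ y, Tendsto (fun i => φ i y) (U : Filter ι) (nhds (ψ y)) := by
  have hc := WeakDual.isCompact_closedBall (𝕜 := ℂ) (E := X) 0 C
  obtain ⟨ψ, hψ, hle⟩ := hc.ultrafilter_le_nhds' (U.map fun i => StrongDual.toWeakDual (φ i)) (by
    rw [Ultrafilter.mem_map]
    filter_upwards [h] with i hi
    simpa using hi)
  refine ⟨WeakDual.toStrongDual ψ, by simpa using hψ, fun y => ?_⟩
  have ht : Tendsto (fun i => StrongDual.toWeakDual (φ i)) (U : Filter ι) (nhds ψ) := hle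
  exact (WeakDual.eval_continuous y).continuousAt.tendsto.comp ht

lemma aux_res {X : Type*} [NormedAddCommGroup X] [NormedSpace ℂ X] [CompleteSpace X]
    (T : X →L[ℂ] X) (C : ℝ) (hC : ∀ n : ℕ, ‖T ^ n‖ ≤ C) (z : ℂ) (hz : 1 < ‖z‖) :
    z ∉ spectrum ℂ T := by
  intro h
  have h1 : ∀ n : ℕ, ‖z‖ ^ n ≤ C * ‖(1 : X →L[ℂ] X)‖ := by
    intro n
    rw [← norm_pow]
    refine (spectrum.norm_le_norm_mul_of_mem (spectrum.pow_mem_pow T n h)).trans ?_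
    gcongr
    exact hC n
  obtain ⟨n, hn⟩ := pow_unbounded_of_one_lt (C * ‖(1 : X →L[ℂ] X)‖) hz
  exact absurd (h1 n) (not_le.2 hn)

lemma aux_res_mul {X : Type*} [NormedAddCommGroup X] [NormedSpace ℂ X] [CompleteSpace X]
    (T : X →L[ℂ] X) (z : ℂ) (hz : z ∉ spectrum ℂ T) :
    (algebraMap ℂ (X →L[ℂ] X) z - T) * resolvent T z = 1 ∧
    resolvent T z * (algebraMap ℂ (X →L[ℂ] X) z - T) = 1 := by
  have hu : IsUnit (algebraMap ℂ (X →L[ℂ] X) z - T) := spectrum.notMem_iff.1 hz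
  exact ⟨Ring.mul_inverse_cancel _ hu, Ring.inverse_mul_cancel _ hu⟩

lemma aux_res_norm {X : Type*} [NormedAddCommGroup X] [NormedSpace ℂ X] [CompleteSpace X]
    (T : X →L[ℂ] X) (C : ℝ) (hC : ∀ n : ℕ, ‖T ^ n‖ ≤ C) (z : ℂ) (hz : 1 < ‖z‖) :
    ‖resolvent T z‖ * (‖z‖ - 1) ≤ C := by
  obtain ⟨hR, -⟩ := aux_res_mul T z (aux_res T C hC z hz)
  set R := resolvent T z
  have hC0 : 0 ≤ C := (norm_nonneg _).trans (hC 0)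
  set a : X →L[ℂ] X := algebraMap ℂ (X →L[ℂ] X) z with ha
  have hcomm : Commute a T := Algebra.commutes z T
  have han : ∀ n : ℕ, ∀ S : X →L[ℂ] X, ‖a ^ n * S‖ = ‖z‖ ^ n * ‖S‖ := by
    intro n S
    rw [ha, ← map_pow, ← Algebra.smul_def, norm_smul, norm_pow]
  have hpos : 0 < ‖z‖ - 1 := by linarith
  have key : ∀ n : ℕ, ‖R‖ * (‖z‖ - 1) ≤ C + C * ‖R‖ * (‖z‖ - 1) * (‖z‖⁻¹) ^ n := by
    intro n
    have h1 : a ^ n * R = T ^ n * R + ∑ i ∈ range n, a ^ i * T ^ (n - 1 - i) := by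
      have := hcomm.geom_sum₂_mul n
      have h2 : (∑ i ∈ range n, a ^ i * T ^ (n - 1 - i)) * (a - T) * R = (a ^ n - T ^ n) * R := by
        rw [this]
      rw [mul_assoc, hR, mul_one, sub_mul] at h2
      rw [h2]; abel
    have h3 : ‖z‖ ^ n * ‖R‖ ≤ C * ‖R‖ + ∑ i ∈ range n, ‖z‖ ^ i * C := by
      rw [← han n R, h1]
      refine (norm_add_le _ _).trans ?_
      gcongr
      · exact (norm_mul_le _ _).trans (by gcongr; exact hC n)
      · refine (norm_sum_le _ _).trans (sum_le_sum fun i _ => ?_)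
        rw [han]
        gcongr
        exact hC _
    rw [← sum_mul] at h3
    have h4 := geom_sum_mul ‖z‖ n
    have hzn : 0 < ‖z‖ ^ n := by positivity
    have h5 : ‖z‖ ^ n * (‖R‖ * (‖z‖ - 1)) ≤ C * ‖R‖ * (‖z‖ - 1) + (‖z‖ ^ n - 1) * C := by
      rw [← h4]
      nlinarith
    refine le_of_mul_le_mul_left (h5.trans ?_) hzn
    rw [inv_pow]
    have : ‖z‖ ^ n * (C + C * ‖R‖ * (‖z‖ - 1) * (‖z‖ ^ n)⁻¹) = ‖z‖ ^ n * C + C * ‖R‖ * (‖z‖ - 1) := by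
      field_simp
    rw [this]
    nlinarith
  have ht : Tendsto (fun n : ℕ => C + C * ‖R‖ * (‖z‖ - 1) * (‖z‖⁻¹) ^ n) atTop
      (nhds (C + C * ‖R‖ * (‖z‖ - 1) * 0)) := by
    refine tendsto_const_nhds.add (tendsto_const_nhds.mul ?_)
    exact tendsto_pow_atTop_nhds_zero_of_lt_one (by positivity) (inv_lt_one_of_one_lt₀ hz)
  rw [mul_zero, add_zero] at ht
  exact ge_of_tendsto' ht key

lemma aux_radial {X : Type*} [NormedAddCommGroup X] [NormedSpace ℂ X] [CompleteSpace X]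
    (T : X →L[ℂ] X) (C : ℝ) (hC : ∀ n : ℕ, ‖T ^ n‖ ≤ C) (x : X)
    (hE : ∀ (c : StrongDual ℂ X) (l : ℂ), ‖l‖ = 1 → (∀ y, c (T y) = l * c y) → c x = 0)
    (ψ : StrongDual ℂ X) (l : ℂ) (hl : ‖l‖ = 1) (a : ℂ)
    (ha : Tendsto (fun r : ℝ => ((r : ℂ) - 1) * ψ (resolvent T (r * l) x))
      (nhdsWithin 1 (Set.Ioi 1)) (nhds a)) : a = 0 := by
  set U : Ultrafilter ℝ := Ultrafilter.of (nhdsWithin 1 (Set.Ioi 1)) with hU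
  have hUle : (U : Filter ℝ) ≤ nhdsWithin 1 (Set.Ioi 1) := Ultrafilter.of_le _
  have hU1 : ∀ᶠ r in (U : Filter ℝ), 1 < r := hUle self_mem_nhdsWithin
  have hnorm : ∀ r : ℝ, 1 < r → ‖(r : ℂ) * l‖ = r := by
    intro r hr
    rw [norm_mul, hl, Complex.norm_real, Real.norm_eq_abs, abs_of_pos (by linarith), mul_one]
  obtain ⟨c, -, hc⟩ := aux_alaoglu U
    (fun r : ℝ => ((r : ℂ) - 1) • (ψ.comp (resolvent T ((r : ℂ) * l)))) (‖ψ‖ * C) (by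
      filter_upwards [hU1] with r hr
      have h1 := aux_res_norm T C hC (r * l) (by rw [hnorm r hr]; exact hr)
      rw [hnorm r hr] at h1
      rw [norm_smul]
      have h2 : ‖(r : ℂ) - 1‖ = r - 1 := by
        rw [← Complex.ofReal_one, ← Complex.ofReal_sub, Complex.norm_real, Real.norm_eq_abs,
          abs_of_pos (by linarith)]
      rw [h2]
      have h3 := ψ.opNorm_comp_le (resolvent T ((r : ℂ) * l))
      calc (r - 1) * ‖ψ.comp (resolvent T ((r : ℂ) * l))‖
          ≤ (r - 1) * (‖ψ‖ * ‖resolvent T ((r : ℂ) * l)‖) := by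
            apply mul_le_mul_of_nonneg_left h3; linarith
        _ = ‖ψ‖ * (‖resolvent T ((r : ℂ) * l)‖ * (r - 1)) := by ring
        _ ≤ ‖ψ‖ * C := by gcongr)
  simp only [ContinuousLinearMap.smul_apply, ContinuousLinearMap.comp_apply, smul_eq_mul] at hc
  have hr1 : Tendsto (fun r : ℝ => (r : ℂ)) (U : Filter ℝ) (nhds 1) := by
    have : Tendsto (fun r : ℝ => (r : ℂ)) (nhds 1) (nhds ((1 : ℝ) : ℂ)) :=
      Complex.continuous_ofReal.tendsto 1
    rw [Complex.ofReal_one] at this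
    exact this.mono_left (hUle.trans nhdsWithin_le_nhds)
  have hceig : ∀ y, c (T y) = l * c y := by
    intro y
    refine tendsto_nhds_unique (hc (T y)) ?_
    have h1 : Tendsto (fun r : ℝ => ((r : ℂ) * l) * (((r : ℂ) - 1) * ψ (resolvent T (r * l) y))
        - ((r : ℂ) - 1) * ψ y) (U : Filter ℝ) (nhds ((1 * l) * c y - (1 - 1) * ψ y)) :=
      ((hr1.mul_const l).mul (hc y)).sub ((hr1.sub_const 1).mul_const _)
    rw [sub_self, zero_mul, sub_zero, one_mul] at h1
    refine h1.congr' ?_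
    filter_upwards [hU1] with r hr
    have h2 := (aux_res_mul T (r * l) (aux_res T C hC _ (by rw [hnorm r hr]; exact hr))).2
    have h3 := congrArg (fun S : X →L[ℂ] X => ψ (S y)) h2
    simp only [ContinuousLinearMap.mul_apply, ContinuousLinearMap.sub_apply,
      ContinuousLinearMap.algebraMap_apply, ContinuousLinearMap.one_apply, map_sub, map_smul,
      smul_eq_mul] at h3
    rw [← h3]
    ring
  have hcx := hE c l hl hceig
  have := hc x
  rw [hcx] at this
  exact tendsto_nhds_unique (ha.mono_left hUle) this

lemma aux_backward {X : Type*} [NormedAddCommGroup X] [NormedSpace ℂ X]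
    (T : X →L[ℂ] X) (C : ℝ) (hC : ∀ n : ℕ, ‖T ^ n‖ ≤ C) (x : X)
    (hx : ¬ Tendsto (fun n : ℕ => ‖(T ^ n) x‖) atTop (nhds 0)) :
    ∃ χ : ℕ → StrongDual ℂ X, (∀ j, ‖χ j‖ ≤ C) ∧ (∀ j y, χ (j + 1) (T y) = χ j y) ∧ χ 0 x ≠ 0 := by
  have h1 : ∃ ε > 0, ∃ᶠ n in atTop, ε ≤ ‖(T ^ n) x‖ := by
    by_contra hcon
    push Not at hcon
    apply hx
    rw [Metric.tendsto_atTop']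
    intro ε hε
    obtain ⟨N, hN⟩ := eventually_atTop.1 (hcon ε hε)
    exact ⟨N, fun n hn => by simpa using hN n hn.le⟩
  obtain ⟨ε, hε, hfreq⟩ := h1
  have : (atTop ⊓ 𝓟 {n : ℕ | ε ≤ ‖(T ^ n) x‖}).NeBot := frequently_mem_iff_neBot.1 hfreq
  set U : Ultrafilter ℕ := Ultrafilter.of (atTop ⊓ 𝓟 {n : ℕ | ε ≤ ‖(T ^ n) x‖})
  have hU : (U : Filter ℕ) ≤ atTop ⊓ 𝓟 {n : ℕ | ε ≤ ‖(T ^ n) x‖} := Ultrafilter.of_le _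
  choose g hg1 hg2 using fun n : ℕ => exists_dual_vector'' ℂ ((T ^ n) x)
  have hal := fun j : ℕ => aux_alaoglu U (fun m : ℕ => (g m).comp (T ^ (m - j))) C
    (Eventually.of_forall fun m => by
      refine ((g m).opNorm_comp_le _).trans ?_
      calc ‖g m‖ * ‖T ^ (m - j)‖ ≤ 1 * C := by gcongr; exacts [hg1 m, hC _]
        _ = C := one_mul C)
  choose χ hχ1 hχ2 using hal
  refine ⟨χ, hχ1, fun j y => ?_, ?_⟩
  · refine tendsto_nhds_unique (hχ2 (j + 1) (T y)) ((hχ2 j y).congr' ?_)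
    have : ∀ᶠ m in (U : Filter ℕ), j + 1 ≤ m := (hU.trans inf_le_left) (eventually_ge_atTop (j + 1))
    filter_upwards [this] with m hm
    have : m - j = (m - (j + 1)) + 1 := by omega
    rw [this, pow_succ]
    rfl
  · intro h0
    have h2 := (hχ2 0 x).norm
    rw [h0, norm_zero] at h2
    have h3 : ε ≤ 0 := by
      refine ge_of_tendsto h2 ?_
      have : ∀ᶠ m in (U : Filter ℕ), ε ≤ ‖(T ^ m) x‖ := (hU.trans inf_le_right) (mem_principal_self _)
      filter_upwards [this] with m hm
      simp only [ContinuousLinearMap.comp_apply, Nat.sub_zero, hg2]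
      simpa using hm
    linarith

lemma aux_main {X : Type*} [NormedAddCommGroup X] [NormedSpace ℂ X] [CompleteSpace X]
    (T : X →L[ℂ] X) (C : ℝ) (hC : ∀ n : ℕ, ‖T ^ n‖ ≤ C)
    (hσ : (spectrum ℂ T ∩ {lam : ℂ | ‖lam‖ = 1}).Countable) (x : X)
    (hE : ∀ (c : StrongDual ℂ X) (l : ℂ), ‖l‖ = 1 → (∀ y, c (T y) = l * c y) → c x = 0) :
    Tendsto (fun n : ℕ => ‖(T ^ n) x‖) atTop (nhds 0) := by
  by_contra hx
  obtain ⟨χ, hχC, hχT, hχ0⟩ := aux_backward T C hC x hx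
  have hC0 : 0 ≤ C := (norm_nonneg _).trans (hC 0)
  set ψ : StrongDual ℂ X := (χ 0).comp T with hψ
  have hterm : ∀ (u : X) (j : ℕ) (z : ℂ), ‖χ j u * z ^ j‖ ≤ C * ‖u‖ * ‖z‖ ^ j := by
    intro u j z
    rw [norm_mul, norm_pow]
    gcongr
    exact ((χ j).le_opNorm u).trans (by gcongr; exact hχC j)
  have hsum : ∀ (u : X) (z : ℂ), ‖z‖ < 1 → Summable fun j => χ j u * z ^ j := fun u z hz =>
    Summable.of_norm_bounded ((summable_geometric_of_lt_one (norm_nonneg z) hz).mul_left _)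
      (fun j => hterm u j z)
  classical
  set G : ℂ → ℂ := fun z => if ‖z‖ < 1 then - ∑' j, χ j x * z ^ j else ψ (resolvent T z x) with hG
  have hGin : ∀ z, ‖z‖ < 1 → G z = - ∑' j, χ j x * z ^ j := fun z hz => if_pos hz
  have hGout : ∀ z, ¬ ‖z‖ < 1 → G z = ψ (resolvent T z x) := fun z hz => if_neg hz
  have hGres : ∀ z, z ∉ spectrum ℂ T → G z = ψ (resolvent T z x) := by
    intro z hz
    by_cases h1 : ‖z‖ < 1
    swap
    · exact hGout z h1
    rw [hGin z h1]
    set u := resolvent T z x with hu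
    have hxu : x = z • u - T u := by
      have := congrArg (fun S : X →L[ℂ] X => S x) (aux_res_mul T z hz).1
      simpa [ContinuousLinearMap.algebraMap_apply] using this.symm
    have hs := hsum u z h1
    have hs1 : ∑' j, χ j u * z ^ j = χ 0 u * z ^ 0 + ∑' j, χ (j + 1) u * z ^ (j + 1) :=
      hs.tsum_eq_zero_add
    have hs2 := (summable_nat_add_iff 1).2 hs
    have hsT := hsum (T u) z h1
    have hsT1 : ∑' j, χ j (T u) * z ^ j = χ 0 (T u) * z ^ 0 + ∑' j, χ (j + 1) (T u) * z ^ (j + 1) :=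
      hsT.tsum_eq_zero_add
    have e1 : ∑' j, χ j x * z ^ j = z * ∑' j, χ j u * z ^ j - ∑' j, χ j (T u) * z ^ j := by
      rw [← tsum_mul_left, ← (hs.mul_left z).tsum_sub hsT]
      refine tsum_congr fun j => ?_
      rw [hxu]
      simp only [map_sub, map_smul, smul_eq_mul]
      ring
    have e2 : ∑' j, χ (j + 1) (T u) * z ^ (j + 1) = z * ∑' j, χ j u * z ^ j := by
      rw [← tsum_mul_left]
      refine tsum_congr fun j => ?_
      rw [hχT]
      ring
    rw [e1, hsT1, e2, hψ]
    simp
  set K : Set ℂ := spectrum ℂ T ∩ {lam : ℂ | ‖lam‖ = 1} with hK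
  have hKclosed : IsClosed K :=
    (spectrum.isClosed T).inter (isClosed_eq continuous_norm continuous_const)
  have hdiff : ∀ z ∉ K, DifferentiableAt ℂ G z := by
    intro z hz
    by_cases h1 : ‖z‖ < 1
    · obtain ⟨ρ, hρ1, hρ2⟩ := exists_between h1
      have hρ0 : 0 ≤ ρ := (norm_nonneg z).trans hρ1.le
      have hd := Complex.differentiableOn_tsum_of_summable_norm
        (F := fun (j : ℕ) (z : ℂ) => χ j x * z ^ j) (U := Metric.ball 0 ρ)
        (u := fun j => C * ‖x‖ * ρ ^ j)
        ((summable_geometric_of_lt_one hρ0 hρ2).mul_left _) (fun j => by fun_prop)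
        Metric.isOpen_ball (fun j w hw => by
          refine (hterm x j w).trans ?_
          have : ‖w‖ ≤ ρ := by simpa using (Metric.mem_ball.1 hw).le
          gcongr)
      have hzb : Metric.ball (0 : ℂ) ρ ∈ nhds z := Metric.isOpen_ball.mem_nhds (by simpa using hρ1)
      refine (hd.differentiableAt hzb).neg.congr_of_eventuallyEq ?_
      filter_upwards [hzb] with w hw
      exact hGin w ((by simpa using hw : ‖w‖ < ρ).trans hρ2)
    · have hzs : z ∉ spectrum ℂ T := by
        intro hs
        rcases (not_lt.1 h1).eq_or_lt with h | h
        · exact hz ⟨hs, h.symm⟩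
        · exact aux_res T C hC z h hs
      have hd : DifferentiableAt ℂ (resolvent T) z :=
        (spectrum.hasDerivAt_resolvent (spectrum.notMem_iff.1 hzs)).differentiableAt
      have hd2 : DifferentiableAt ℂ (fun w => ψ (resolvent T w x)) z :=
        ψ.differentiableAt.comp z (hd.clm_apply (differentiableAt_const x))
      refine hd2.congr_of_eventuallyEq ?_
      filter_upwards [(spectrum.isClosed T).isOpen_compl.mem_nhds hzs] with w hw
      exact hGres w hw
  have hψn : ‖ψ‖ ≤ C * C := by
    refine ((χ 0).opNorm_comp_le T).trans ?_
    have := hC 1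
    rw [pow_one] at this
    gcongr
    exact hχC 0
  set M : ℝ := max (C * ‖x‖) (C * C * C * ‖x‖)
  have hbound : ∀ z, ‖z‖ ≠ 1 → ‖G z‖ * |‖z‖ - 1| ≤ M := by
    intro z hz
    rcases lt_or_gt_of_ne hz with h | h
    · refine le_trans ?_ (le_max_left _ _)
      rw [hGin z h, norm_neg, abs_sub_comm, abs_of_pos (by linarith)]
      have h1 := tsum_of_norm_bounded
        ((hasSum_geometric_of_lt_one (norm_nonneg z) h).mul_left (C * ‖x‖)) (fun j => hterm x j z)
      have h2 : 0 < 1 - ‖z‖ := by linarith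
      calc _ ≤ C * ‖x‖ * (1 - ‖z‖)⁻¹ * (1 - ‖z‖) := by gcongr
        _ = C * ‖x‖ := by field_simp
    · refine le_trans ?_ (le_max_right _ _)
      rw [hGout z (by linarith), abs_of_pos (by linarith)]
      have h1 := aux_res_norm T C hC z h
      have h2 : 0 < ‖z‖ - 1 := by linarith
      have h3 : ‖ψ (resolvent T z x)‖ ≤ C * C * (‖resolvent T z‖ * ‖x‖) := by
        refine (ψ.le_opNorm _).trans ?_
        gcongr
        exact ContinuousLinearMap.le_opNorm _ _
      calc _ ≤ C * C * (‖resolvent T z‖ * ‖x‖) * (‖z‖ - 1) := by gcongr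
        _ = C * C * ‖x‖ * (‖resolvent T z‖ * (‖z‖ - 1)) := by ring
        _ ≤ C * C * ‖x‖ * C := by gcongr
        _ = C * C * C * ‖x‖ := by ring
  have hfin := aux_entire G K hKclosed hσ (fun z hz => hz.2) hdiff M hbound (by
    intro l hl a ha
    refine aux_radial T C hC x hE ψ l hl a (ha.congr' ?_)
    filter_upwards [self_mem_nhdsWithin] with r hr
    have hr' : (1 : ℝ) < r := hr
    rw [hGout]
    rw [norm_mul, hl, Complex.norm_real, Real.norm_eq_abs, abs_of_pos (by linarith)]
    linarith)
  have h0 := hfin 0 (fun h => by simpa using h.2)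
  rw [hGin 0 (by simp), tsum_eq_single 0 (fun j hj => by simp [hj])] at h0
  simp at h0
  exact hχ0 h0

theorem stability_of_countable_unimodular_spectrum {X : Type*} [NormedAddCommGroup X]
    [NormedSpace ℂ X] [CompleteSpace X] (T : X →L[ℂ] X)
    (hpb : ∃ C : ℝ, ∀ n : ℕ, ‖T ^ n‖ ≤ C)
    (hσ : (spectrum ℂ T ∩ {lam : ℂ | ‖lam‖ = 1}).Countable) (x : X) :
    ((∃ n : ℕ → ℕ, StrictMono n ∧ ∀ f : StrongDual ℂ X,
        Tendsto (fun j : ℕ => f ((T ^ n j) x)) atTop (nhds 0)) ↔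
      (∀ f : StrongDual ℂ X,
        Tendsto (fun n : ℕ => (∑ k ∈ Icc 1 n, ‖f ((T ^ k) x)‖) / n) atTop (nhds 0))) ∧
    ((∀ f : StrongDual ℂ X,
        Tendsto (fun n : ℕ => (∑ k ∈ Icc 1 n, ‖f ((T ^ k) x)‖) / n) atTop (nhds 0)) ↔
      Tendsto (fun n : ℕ => ‖(T ^ n) x‖) atTop (nhds 0)) := by
  obtain ⟨C, hC⟩ := hpb
  have heig : ∀ (c : StrongDual ℂ X) (l : ℂ), ‖l‖ = 1 → (∀ y, c (T y) = l * c y) →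
      ∀ n : ℕ, ‖c ((T ^ n) x)‖ = ‖c x‖ := by
    intro c l hl hc n
    induction n with
    | zero => simp
    | succ n ih =>
      have : (T ^ (n + 1)) x = T ((T ^ n) x) := by rw [pow_succ']; rfl
      rw [this, hc, norm_mul, hl, one_mul, ih]
  have h13 : (∃ n : ℕ → ℕ, StrictMono n ∧ ∀ f : StrongDual ℂ X,
        Tendsto (fun j : ℕ => f ((T ^ n j) x)) atTop (nhds 0)) →
      Tendsto (fun n : ℕ => ‖(T ^ n) x‖) atTop (nhds 0) := by
    rintro ⟨n, -, hn⟩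
    refine aux_main T C hC hσ x fun c l hl hc => ?_
    have h1 := (hn c).norm
    simp only [heig c l hl hc, norm_zero] at h1
    exact norm_eq_zero.1 (tendsto_nhds_unique tendsto_const_nhds h1)
  have h23 : (∀ f : StrongDual ℂ X,
        Tendsto (fun n : ℕ => (∑ k ∈ Icc 1 n, ‖f ((T ^ k) x)‖) / n) atTop (nhds 0)) →
      Tendsto (fun n : ℕ => ‖(T ^ n) x‖) atTop (nhds 0) := by
    intro h
    refine aux_main T C hC hσ x fun c l hl hc => ?_
    have h1 := h c
    simp only [heig c l hl hc, sum_const, Nat.card_Icc, Nat.add_sub_cancel, nsmul_eq_mul] at h1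
    have h2 : Tendsto (fun n : ℕ => (n : ℝ) * ‖c x‖ / n) atTop (nhds ‖c x‖) := by
      refine tendsto_const_nhds.congr' ?_
      filter_upwards [eventually_gt_atTop 0] with n hn
      have : (n : ℝ) ≠ 0 := by exact_mod_cast hn.ne'
      field_simp
    exact norm_eq_zero.1 (tendsto_nhds_unique h2 h1)
  have h3w : Tendsto (fun n : ℕ => ‖(T ^ n) x‖) atTop (nhds 0) → ∀ f : StrongDual ℂ X,
        Tendsto (fun j : ℕ => f ((T ^ j) x)) atTop (nhds 0) := by
    intro h f
    have h1 := tendsto_zero_iff_norm_tendsto_zero.2 h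
    have h2 := (f.continuous.tendsto 0).comp h1
    rw [map_zero] at h2
    exact h2
  have h31 : Tendsto (fun n : ℕ => ‖(T ^ n) x‖) atTop (nhds 0) →
      ∃ n : ℕ → ℕ, StrictMono n ∧ ∀ f : StrongDual ℂ X,
        Tendsto (fun j : ℕ => f ((T ^ n j) x)) atTop (nhds 0) :=
    fun h => ⟨id, strictMono_id, h3w h⟩
  have h32 : Tendsto (fun n : ℕ => ‖(T ^ n) x‖) atTop (nhds 0) → ∀ f : StrongDual ℂ X,
      Tendsto (fun n : ℕ => (∑ k ∈ Icc 1 n, ‖f ((T ^ k) x)‖) / n) atTop (nhds 0) := by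
    intro h f
    have h1 : Tendsto (fun n : ℕ => ‖f ((T ^ (n + 1)) x)‖) atTop (nhds 0) := by
      have h2 := ((h3w h f).norm).comp (tendsto_add_atTop_nat 1)
      rw [norm_zero] at h2
      exact h2
    refine h1.cesaro.congr fun n => ?_
    rw [div_eq_inv_mul]
    congr 1
    rw [Finset.range_eq_Ico, Finset.sum_Ico_add' (fun k => ‖f ((T ^ k) x)‖) 0 n 1]
    rfl
  exact ⟨⟨fun h => h32 (h13 h), fun h => h31 (h23 h)⟩, ⟨h23, h32⟩⟩
end

section
/- Let X be a Banach space over 𝕜, where 𝕜 is ℝ or ℂ, and let T be a power-bounded operator on X of the form T = α·I + S with α ∈ 𝕜 and S^k a compact operator for some k ≥ 1. Then for every x ∈ X the following are equivalent: (i) there exists a strictly increasing sequence of natural numbers (n_j) such that ⟨x*, T^{n_j} x⟩ → 0 for every x* ∈ X*; (ii) (1/n) ∑_{k=1}^n |⟨x*, T^k x⟩| → 0 as n → ∞, for every x* ∈ X*; (iii) ‖Tⁿ x‖ → 0 as n → ∞. -/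
open Filter Finset


theorem aux_stab {𝕜 : Type*} [RCLike 𝕜]
    {X : Type*} [NormedAddCommGroup X] [NormedSpace 𝕜 X]
    (T : X →L[𝕜] X) (C : ℝ) (hC : ∀ n : ℕ, ‖T ^ n‖ ≤ C) (z : X)
    (h : ∀ ε > 0, ∃ n : ℕ, ‖(T ^ n) z‖ < ε) :
    Tendsto (fun n : ℕ => (T ^ n) z) atTop (nhds 0) := by
  have hC0 : 0 ≤ C := (norm_nonneg _).trans (hC 0)
  rw [Metric.tendsto_atTop]
  intro ε hε
  obtain ⟨n, hn⟩ := h (ε / (C + 1)) (by positivity)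
  refine ⟨n, fun m hm => ?_⟩
  obtain ⟨d, rfl⟩ := Nat.exists_eq_add_of_le' hm
  rw [dist_zero_right, pow_add, ContinuousLinearMap.mul_apply]
  have h1 : (C + 1) * ‖(T ^ n) z‖ < ε := by
    rw [lt_div_iff₀ (by positivity)] at hn
    linarith
  have h2 := (T ^ d).le_of_opNorm_le (hC d) ((T ^ n) z)
  nlinarith [norm_nonneg ((T ^ n) z)]

/-- The stable subspace. -/
def stabSub {𝕜 : Type*} [RCLike 𝕜]
    {X : Type*} [NormedAddCommGroup X] [NormedSpace 𝕜 X]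
    (T : X →L[𝕜] X) : Submodule 𝕜 X where
  carrier := {z | Tendsto (fun n : ℕ => (T ^ n) z) atTop (nhds 0)}
  zero_mem' := by simp
  add_mem' := by
    intro a b ha hb
    have := Tendsto.add ha hb
    simpa using this
  smul_mem' := by
    intro c a ha
    have := Tendsto.const_smul ha c
    rw [smul_zero] at this
    exact this.congr fun n => ((T ^ n).map_smul c a).symm

theorem mem_stabSub {𝕜 : Type*} [RCLike 𝕜]
    {X : Type*} [NormedAddCommGroup X] [NormedSpace 𝕜 X]
    (T : X →L[𝕜] X) (z : X) :
    z ∈ stabSub T ↔ Tendsto (fun n : ℕ => (T ^ n) z) atTop (nhds 0) := Iff.rfl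

/-- If some iterate is close to the stable subspace, then the point is stable. -/
theorem aux_close {𝕜 : Type*} [RCLike 𝕜]
    {X : Type*} [NormedAddCommGroup X] [NormedSpace 𝕜 X]
    (T : X →L[𝕜] X) (C : ℝ) (hC : ∀ n : ℕ, ‖T ^ n‖ ≤ C) (z : X)
    (h : ∀ ε > 0, ∃ n : ℕ, ∃ y ∈ stabSub T, ‖(T ^ n) z - y‖ < ε) :
    z ∈ stabSub T := by
  have hC0 : 0 ≤ C := (norm_nonneg _).trans (hC 0)
  refine aux_stab T C hC z fun ε hε => ?_
  obtain ⟨n, y, hy, hn⟩ := h (ε / (2 * (C + 1))) (by positivity)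
  rw [mem_stabSub, Metric.tendsto_atTop] at hy
  obtain ⟨m, hm⟩ := hy (ε / 2) (by positivity)
  have hm := hm m le_rfl
  rw [dist_zero_right] at hm
  refine ⟨m + n, ?_⟩
  rw [pow_add, ContinuousLinearMap.mul_apply]
  have e : (T ^ m) ((T ^ n) z) = (T ^ m) ((T ^ n) z - y) + (T ^ m) y := by simp
  have h2 := (T ^ m).le_of_opNorm_le (hC m) ((T ^ n) z - y)
  have h3 : (C + 1) * ‖(T ^ n) z - y‖ < ε / 2 := by
    rw [lt_div_iff₀ (by positivity)] at hn
    linarith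
  rw [e]
  have := norm_add_le ((T ^ m) ((T ^ n) z - y)) ((T ^ m) y)
  nlinarith [norm_nonneg ((T ^ n) z - y)]

theorem stab_closed {𝕜 : Type*} [RCLike 𝕜]
    {X : Type*} [NormedAddCommGroup X] [NormedSpace 𝕜 X]
    (T : X →L[𝕜] X) (C : ℝ) (hC : ∀ n : ℕ, ‖T ^ n‖ ≤ C) :
    IsClosed (stabSub T : Set X) := by
  refine isClosed_of_closure_subset fun z hz => aux_close T C hC z fun ε hε => ?_
  obtain ⟨y, hy, hd⟩ := Metric.mem_closure_iff.1 hz ε hε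
  exact ⟨0, y, hy, by simpa [dist_eq_norm] using hd⟩

/-- Zero is in the weak closure of the orbit. -/
def WkRec {𝕜 : Type*} [RCLike 𝕜]
    {X : Type*} [NormedAddCommGroup X] [NormedSpace 𝕜 X]
    (T : X →L[𝕜] X) (x : X) : Prop :=
  ∀ (F : Set (StrongDual 𝕜 X)), F.Finite → ∀ ε > (0 : ℝ), ∃ n : ℕ, ∀ f ∈ F, ‖f ((T ^ n) x)‖ < ε

theorem WkRec.map {𝕜 : Type*} [RCLike 𝕜]
    {X : Type*} [NormedAddCommGroup X] [NormedSpace 𝕜 X]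
    {T : X →L[𝕜] X} {x : X} (h : WkRec T x) (S : X →L[𝕜] X) (hc : Commute S T) :
    WkRec T (S x) := by
  intro F hF ε hε
  obtain ⟨n, hn⟩ := h ((fun f => f.comp S) '' F) (hF.image _) ε hε
  refine ⟨n, fun f hf => ?_⟩
  have := hn _ ⟨f, hf, rfl⟩
  have e : (T ^ n) (S x) = S ((T ^ n) x) := by
    have := congrArg (fun A : X →L[𝕜] X => A x) (hc.pow_right n).eq
    simpa using this.symm
  rw [e]
  simpa using this

theorem aux_compact {𝕜 : Type*} [RCLike 𝕜]
    {X : Type*} [NormedAddCommGroup X] [NormedSpace 𝕜 X]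
    (T K : X →L[𝕜] X) (C : ℝ) (hC : ∀ n : ℕ, ‖T ^ n‖ ≤ C) (x : X)
    (h : WkRec T x) (hc : Commute K T) (hK : IsCompactOperator K) :
    K x ∈ stabSub T := by
  refine aux_stab T C hC _ fun ε hε => ?_
  by_contra! hcon
  obtain ⟨Q, hQ, hQs⟩ := hK.image_subset_compact_of_bounded (f := (K : X →ₗ[𝕜] X))
    (Metric.isBounded_closedBall (x := (0 : X)) (r := C * ‖x‖))
  have hmem : ∀ n : ℕ, (T ^ n) (K x) ∈ Q := by
    intro n
    have e : (T ^ n) (K x) = K ((T ^ n) x) := by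
      have := congrArg (fun A : X →L[𝕜] X => A x) (hc.pow_right n).eq
      simpa using this.symm
    rw [e]
    refine hQs ⟨(T ^ n) x, ?_, rfl⟩
    simpa using (T ^ n).le_of_opNorm_le (hC n) x
  have hQ' : IsCompact (Q ∩ {p | ε ≤ ‖p‖}) :=
    hQ.inter_right (isClosed_le continuous_const continuous_norm)
  obtain ⟨F, hF⟩ := hQ'.elim_finite_subcover
    (fun f : StrongDual 𝕜 X => {p | ε / 2 < ‖f p‖})
    (fun f => isOpen_lt continuous_const f.continuous.norm) (by
      rintro p ⟨-, hp⟩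
      obtain ⟨g, hg, hgp⟩ := exists_dual_vector'' 𝕜 p
      refine Set.mem_iUnion.2 ⟨g, ?_⟩
      have hp' : ε ≤ ‖p‖ := hp
      simp only [Set.mem_setOf_eq, hgp, RCLike.norm_ofReal, abs_norm]
      linarith)
  obtain ⟨n, hn⟩ := h.map K hc (↑F) F.finite_toSet (ε / 2) (by positivity)
  have := hF ⟨hmem n, hcon n⟩
  simp only [Set.mem_iUnion, Set.mem_setOf_eq] at this
  obtain ⟨f, hf, hlt⟩ := this
  exact absurd (hn f hf) (not_lt.2 hlt.le)

theorem aux_step {𝕜 : Type*} [RCLike 𝕜]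
    {X : Type*} [NormedAddCommGroup X] [NormedSpace 𝕜 X]
    (α : 𝕜) (S T : X →L[𝕜] X) (hT : T = α • (1 : X →L[𝕜] X) + S)
    (C : ℝ) (hC : ∀ n : ℕ, ‖T ^ n‖ ≤ C) (w : X)
    (h : WkRec T w) (hS : S w ∈ stabSub T) : w ∈ stabSub T := by
  have hinv : ∀ y ∈ stabSub T, T y ∈ stabSub T := by
    intro y hy
    rw [mem_stabSub] at hy ⊢
    have := hy.comp (tendsto_add_atTop_nat 1)
    refine this.congr fun n => ?_
    simp [pow_succ]
  have hTw : T w = α • w + S w := by rw [hT]; simp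
  have hdiff : ∀ n : ℕ, (T ^ n) w - α ^ n • w ∈ stabSub T := by
    intro n
    induction n with
    | zero => simp
    | succ n ih =>
      have e : (T ^ (n + 1)) w - α ^ (n + 1) • w
          = T ((T ^ n) w - α ^ n • w) + α ^ n • S w := by
        rw [pow_succ', ContinuousLinearMap.mul_apply, map_sub, map_smul, hTw, smul_add,
          smul_smul, pow_succ]
        abel
      rw [e]
      exact add_mem (hinv _ ih) (Submodule.smul_mem _ _ hS)
  by_contra hw
  have hcl : IsClosed (stabSub T : Set X) := stab_closed T C hC
  obtain ⟨f, hf0, hf⟩ : ∃ f : StrongDual 𝕜 X, (∀ y ∈ stabSub T, f y = 0) ∧ f w ≠ 0 := by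
    haveI : IsClosed (stabSub T : Set X) := hcl
    have hne : (stabSub T).mkQL w ≠ 0 := by
      simpa using hw
    obtain ⟨g, hg⟩ := SeparatingDual.exists_ne_zero (R := 𝕜) hne
    refine ⟨g.comp (stabSub T).mkQL, fun y hy => ?_, hg⟩
    have : (stabSub T).mkQL y = 0 := by simpa using hy
    simp only [ContinuousLinearMap.comp_apply, this, map_zero]
  have hfn : ∀ n : ℕ, f ((T ^ n) w) = α ^ n * f w := by
    intro n
    have := hf0 _ (hdiff n)
    rw [map_sub, map_smul, sub_eq_zero] at this
    simpa using this
  have hα : ‖α‖ < 1 := by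
    obtain ⟨n, hn⟩ := h {f} (Set.finite_singleton f) ‖f w‖ (norm_pos_iff.2 hf)
    have hn := hn f rfl
    rw [hfn, norm_mul, norm_pow] at hn
    by_contra! h1
    have := one_le_pow₀ h1 (n := n)
    nlinarith [norm_nonneg (f w)]
  apply hw
  refine aux_close T C hC w fun ε hε => ?_
  have ht : Tendsto (fun n : ℕ => ‖α ^ n • w‖) atTop (nhds 0) := by
    have := ((tendsto_pow_atTop_nhds_zero_of_norm_lt_one hα).smul_const w).norm
    simpa using this
  obtain ⟨n, hn⟩ := (ht.eventually (gt_mem_nhds hε)).exists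
  exact ⟨n, _, hdiff n, by simpa using hn⟩

theorem aux_main_s6 {𝕜 : Type*} [RCLike 𝕜]
    {X : Type*} [NormedAddCommGroup X] [NormedSpace 𝕜 X]
    (α : 𝕜) (S : X →L[𝕜] X) (k : ℕ)
    (hS : IsCompactOperator (S ^ k : X →L[𝕜] X))
    (T : X →L[𝕜] X) (hT : T = α • (1 : X →L[𝕜] X) + S)
    (C : ℝ) (hC : ∀ n : ℕ, ‖T ^ n‖ ≤ C) (x : X) (h : WkRec T x) : x ∈ stabSub T := by
  have hc : Commute S T := by
    rw [hT]
    exact ((Commute.one_right S).smul_right α).add_right (Commute.refl S)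
  have key : ∀ j : ℕ, (S ^ j) x ∈ stabSub T → x ∈ stabSub T := by
    intro j
    induction j with
    | zero => intro h; simpa using h
    | succ j ih =>
      intro hj
      apply ih
      refine aux_step α S T hT C hC _ (h.map _ (hc.pow_left j)) ?_
      rwa [pow_succ', ContinuousLinearMap.mul_apply] at hj
  exact key k (aux_compact T (S ^ k) C hC x h (hc.pow_left k) hS)

theorem wkRec_of_i {𝕜 : Type*} [RCLike 𝕜]
    {X : Type*} [NormedAddCommGroup X] [NormedSpace 𝕜 X]
    (T : X →L[𝕜] X) (x : X) (n : ℕ → ℕ) (h : ∀ f : StrongDual 𝕜 X,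
        Tendsto (fun j : ℕ => f ((T ^ n j) x)) atTop (nhds 0)) : WkRec T x := by
  intro F hF ε hε
  have : ∀ᶠ j in atTop, ∀ f ∈ F, ‖f ((T ^ n j) x)‖ < ε := by
    rw [Filter.eventually_all_finite hF]
    intro f _
    have := (h f).norm
    rw [norm_zero] at this
    exact this.eventually (gt_mem_nhds hε)
  obtain ⟨j, hj⟩ := this.exists
  exact ⟨n j, hj⟩

theorem wkRec_of_ii {𝕜 : Type*} [RCLike 𝕜]
    {X : Type*} [NormedAddCommGroup X] [NormedSpace 𝕜 X]
    (T : X →L[𝕜] X) (x : X) (h : ∀ f : StrongDual 𝕜 X,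
        Tendsto (fun n : ℕ => (∑ k ∈ Icc 1 n, ‖f ((T ^ k) x)‖) / n) atTop (nhds 0)) :
    WkRec T x := by
  intro F hF ε hε
  by_contra! hcon
  lift F to Finset (StrongDual 𝕜 X) using hF
  have hsum : Tendsto (fun n : ℕ => ∑ f ∈ F, (∑ k ∈ Icc 1 n, ‖f ((T ^ k) x)‖) / n)
      atTop (nhds 0) := by
    have := tendsto_finset_sum F (fun f _ => h f)
    simpa using this
  have hge : ∀ᶠ n : ℕ in atTop, ε ≤ ∑ f ∈ F, (∑ k ∈ Icc 1 n, ‖f ((T ^ k) x)‖) / n := by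
    filter_upwards [eventually_gt_atTop 0] with n hn
    have hn' : (0 : ℝ) < n := by exact_mod_cast hn
    rw [← Finset.sum_div, le_div_iff₀ hn', Finset.sum_comm]
    calc ε * n = ∑ k ∈ Icc 1 n, ε := by simp [mul_comm]
      _ ≤ _ := by
        refine Finset.sum_le_sum fun m _ => ?_
        obtain ⟨f, hf, hle⟩ := hcon m
        exact hle.trans (Finset.single_le_sum (f := fun f : StrongDual 𝕜 X => ‖f ((T ^ m) x)‖)
          (fun _ _ => norm_nonneg _) hf)
  have := ge_of_tendsto hsum hge
  linarith

theorem ii_of_iii {𝕜 : Type*} [RCLike 𝕜]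
    {X : Type*} [NormedAddCommGroup X] [NormedSpace 𝕜 X]
    (T : X →L[𝕜] X) (x : X) (h : x ∈ stabSub T) (f : StrongDual 𝕜 X) :
    Tendsto (fun n : ℕ => (∑ k ∈ Icc 1 n, ‖f ((T ^ k) x)‖) / n) atTop (nhds 0) := by
  rw [mem_stabSub] at h
  have h1 : Tendsto (fun n : ℕ => ‖f ((T ^ (n + 1)) x)‖) atTop (nhds 0) := by
    have := ((f.continuous.tendsto 0).comp (h.comp (tendsto_add_atTop_nat 1))).norm
    simpa using this
  refine h1.cesaro.congr fun n => ?_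
  rw [div_eq_inv_mul]
  congr 1
  rw [Finset.range_eq_Ico, Finset.sum_Ico_add' (fun k => ‖f ((T ^ k) x)‖) 0 n 1]
  rfl

/-- Let `X` be a Banach space over `𝕜` (`𝕜 = ℝ` or `ℂ`) and `T = α·I + S`
power-bounded with `S^k` compact for some `k ≥ 1`. Then for every `x ∈ X` the following are
equivalent: (i) some subsequence of `(Tⁿ x)` converges weakly to `0`;
(ii) `(1/n) ∑_{k=1}^n |⟨x*, Tᵏ x⟩| → 0` for every `x* ∈ X*`; (iii) `‖Tⁿ x‖ → 0`. -/
theorem real_stability_scalar_plus_compact_power {𝕜 : Type*} [RCLike 𝕜]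
    {X : Type*} [NormedAddCommGroup X] [NormedSpace 𝕜 X] [CompleteSpace X]
    (α : 𝕜) (S : X →L[𝕜] X) (k : ℕ) (hk : 1 ≤ k)
    (hS : IsCompactOperator (S ^ k : X →L[𝕜] X))
    (T : X →L[𝕜] X) (hT : T = α • (1 : X →L[𝕜] X) + S)
    (hpb : ∃ C : ℝ, ∀ n : ℕ, ‖T ^ n‖ ≤ C) (x : X) :
    ((∃ n : ℕ → ℕ, StrictMono n ∧ ∀ f : StrongDual 𝕜 X,
        Tendsto (fun j : ℕ => f ((T ^ n j) x)) atTop (nhds 0)) ↔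
      (∀ f : StrongDual 𝕜 X,
        Tendsto (fun n : ℕ => (∑ k ∈ Icc 1 n, ‖f ((T ^ k) x)‖) / n) atTop (nhds 0))) ∧
    ((∀ f : StrongDual 𝕜 X,
        Tendsto (fun n : ℕ => (∑ k ∈ Icc 1 n, ‖f ((T ^ k) x)‖) / n) atTop (nhds 0)) ↔
      Tendsto (fun n : ℕ => ‖(T ^ n) x‖) atTop (nhds 0)) := by
  obtain ⟨C, hC⟩ := hpb
  have main := aux_main_s6 α S k hS T hT C hC x
  refine ⟨⟨?_, ?_⟩, ?_, ?_⟩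
  · rintro ⟨n, -, hn⟩ f
    exact ii_of_iii T x (main (wkRec_of_i T x n hn)) f
  · intro h
    refine ⟨id, strictMono_id, fun f => ?_⟩
    have h3 := (mem_stabSub T x).1 (main (wkRec_of_ii T x h))
    have := (f.continuous.tendsto 0).comp h3
    rw [map_zero] at this
    exact this
  · intro h
    have h3 := (mem_stabSub T x).1 (main (wkRec_of_ii T x h))
    simpa using h3.norm
  · intro h f
    exact ii_of_iii T x ((mem_stabSub T x).2 (tendsto_zero_iff_norm_tendsto_zero.2 h)) f
end

section
/- Let X be a reflexive Banach space over 𝕜 (𝕜 = ℝ or ℂ), let T be a power-bounded operator on X, and let E : X → X be a bounded operator such that (1/n) ∑_{k=1}^n T^k x → E x in norm for every x ∈ X (the ergodic projection of T). Then T is weakly mixing if and only if T* is weakly mixing with ergodic projection E*; that is, [for every x ∈ X and x* ∈ X*: (1/n) ∑_{k=1}^n |⟨x*, T^k(x − Ex)⟩| → 0] holds if and only if [for every x* ∈ X* and every Φ ∈ X**: (1/n) ∑_{k=1}^n |⟨Φ, T*^k(x* − E*x*)⟩| → 0] holds. -/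
open Filter Finset

/-- The Banach-space adjoint of `T`, acting on the dual space: `T* f = f ∘ T`. -/
noncomputable def banachAdjoint {𝕜 : Type*} [RCLike 𝕜] {X : Type*} [NormedAddCommGroup X]
    [NormedSpace 𝕜 X] (T : X →L[𝕜] X) :
    StrongDual 𝕜 X →L[𝕜] StrongDual 𝕜 X :=
  (ContinuousLinearMap.compL 𝕜 X X 𝕜).flip T

theorem banachAdjoint_pow_apply_aux {𝕜 : Type*} [RCLike 𝕜] {X : Type*} [NormedAddCommGroup X]
    [NormedSpace 𝕜 X] (T : X →L[𝕜] X) (k : ℕ) (f : StrongDual 𝕜 X) (x : X) :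
    ((banachAdjoint T ^ k) f) x = f ((T ^ k) x) := by
  induction k generalizing f with
  | zero => simp
  | succ k ih =>
    rw [pow_succ, pow_succ']
    simp only [ContinuousLinearMap.mul_apply]
    rw [ih]
    rfl

/-- Let `X` be a reflexive Banach space over `𝕜` (`ℝ` or `ℂ`), `T`
power-bounded with ergodic projection `E`. Then `T` is weakly mixing iff its adjoint `T*`
is weakly mixing (with ergodic projection `E*`). -/
theorem weakMixing_iff_adjoint_weakMixing {𝕜 : Type*} [RCLike 𝕜]
    {X : Type*} [NormedAddCommGroup X] [NormedSpace 𝕜 X] [CompleteSpace X]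
    (hrefl : Function.Bijective (NormedSpace.inclusionInDoubleDual 𝕜 X))
    (T : X →L[𝕜] X) (hpb : ∃ C : ℝ, ∀ n : ℕ, ‖T ^ n‖ ≤ C)
    (E : X →L[𝕜] X)
    (hE : ∀ x : X, Tendsto (fun n : ℕ => (n : 𝕜)⁻¹ • ∑ k ∈ Icc 1 n, (T ^ k) x)
      atTop (nhds (E x))) :
    (∀ x : X, ∀ f : StrongDual 𝕜 X,
        Tendsto (fun n : ℕ => (∑ k ∈ Icc 1 n, ‖f ((T ^ k) (x - E x))‖) / n) atTop (nhds 0)) ↔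
    (∀ f : StrongDual 𝕜 X, ∀ Φ : StrongDual 𝕜 (StrongDual 𝕜 X),
        Tendsto (fun n : ℕ =>
            (∑ k ∈ Icc 1 n, ‖Φ ((banachAdjoint T ^ k) (f - banachAdjoint E f))‖) / n)
          atTop (nhds 0)) := by
  have hc : ∀ x, E (T x) = T (E x) := by
    intro x
    refine tendsto_nhds_unique (hE (T x)) ?_
    have h := (T.continuous.tendsto (E x)).comp (hE x)
    refine h.congr fun n => ?_
    simp only [Function.comp, map_smul, map_sum]
    congr 1
    refine Finset.sum_congr rfl fun k _ => ?_
    rw [← ContinuousLinearMap.mul_apply, ← ContinuousLinearMap.mul_apply, ← pow_succ, ← pow_succ']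
  have hck : ∀ (k : ℕ) x, E ((T ^ k) x) = (T ^ k) (E x) := by
    intro k
    induction k with
    | zero => simp
    | succ k ih =>
      intro x
      rw [pow_succ]
      simp only [ContinuousLinearMap.mul_apply]
      rw [ih, hc]
  have key : ∀ (x : X) (f : StrongDual 𝕜 X) (k : ℕ),
      (NormedSpace.inclusionInDoubleDual 𝕜 X x)
        ((banachAdjoint T ^ k) (f - banachAdjoint E f)) = f ((T ^ k) (x - E x)) := by
    intro x f k
    rw [NormedSpace.dual_def, banachAdjoint_pow_apply_aux, map_sub, map_sub, ← hck]
    rfl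
  constructor
  · intro h f Φ
    obtain ⟨x, rfl⟩ := hrefl.2 Φ
    simp only [key]
    exact h x f
  · intro h x f
    have := h f (NormedSpace.inclusionInDoubleDual 𝕜 X x)
    simpa only [key] using this
end

section
/- Let X be a reflexive Banach space over 𝕜 (𝕜 = ℝ or ℂ), and let T be a power-bounded operator on X which is weakly mixing, with ergodic projection E (a bounded operator such that (1/n) ∑_{k=1}^n T^k x → E x in norm for every x ∈ X). If T = α·I + S for some scalar α ∈ 𝕜 with S^k compact for some k ≥ 1, then T is stable: ‖Tⁿ x − E x‖ → 0 for every x ∈ X; moreover T* is stable: ‖T*ⁿ x* − E* x*‖ → 0 for every x* ∈ X*. -/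
open Filter Finset

section helpers

variable {𝕜 : Type*} [RCLike 𝕜] {V : Type*} [NormedAddCommGroup V] [NormedSpace 𝕜 V]

/-- The stable subspace of `T`. -/
def stableSub (T : V →L[𝕜] V) : Submodule 𝕜 V where
  carrier := {x | Tendsto (fun n : ℕ => (T ^ n) x) atTop (nhds 0)}
  add_mem' := by
    intro a b ha hb
    have := Tendsto.add ha hb
    simpa using this
  zero_mem' := by simp
  smul_mem' := by
    intro c x hx
    have := Tendsto.const_smul hx c
    rw [smul_zero] at this
    exact this.congr fun n => (map_smul (T ^ n) c x).symm

theorem mem_stableSub (T : V →L[𝕜] V) (x : V) :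
    x ∈ stableSub T ↔ Tendsto (fun n : ℕ => (T ^ n) x) atTop (nhds 0) := Iff.rfl

theorem stableSub_closed (T : V →L[𝕜] V) (C : ℝ) (hC : ∀ n : ℕ, ‖T ^ n‖ ≤ C) :
    IsClosed (stableSub T : Set V) := by
  have hC0 : 0 ≤ C := (norm_nonneg _).trans (hC 0)
  refine isClosed_of_closure_subset ?_
  intro y hy
  change Tendsto (fun n : ℕ => (T ^ n) y) atTop (nhds 0)
  rw [Metric.tendsto_atTop]
  intro ε hε
  obtain ⟨m, hm, hd⟩ := Metric.mem_closure_iff.1 hy (ε / (2 * (C + 1))) (by positivity)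
  have hm' : Tendsto (fun n : ℕ => (T ^ n) m) atTop (nhds 0) := hm
  obtain ⟨N, hN⟩ := Metric.tendsto_atTop.1 hm' (ε / 2) (by positivity)
  refine ⟨N, fun n hn => ?_⟩
  have h1 := hN n hn
  rw [dist_zero_right] at h1 ⊢
  rw [dist_eq_norm] at hd
  have h2 : ‖(T ^ n) (y - m)‖ ≤ C * ‖y - m‖ :=
    ((T ^ n).le_opNorm _).trans (by gcongr; exact hC n)
  have h3 : C * ‖y - m‖ ≤ ε / 2 := by
    calc C * ‖y - m‖ ≤ (C + 1) * (ε / (2 * (C + 1))) := by gcongr; linarith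
      _ = ε / 2 := by field_simp
  have h4 : (T ^ n) y = (T ^ n) (y - m) + (T ^ n) m := by rw [map_sub]; abel
  rw [h4]
  exact (norm_add_le _ _).trans_lt (by linarith)

theorem exists_sep (M : Submodule 𝕜 V) (hM : IsClosed (M : Set V)) (y : V) (hy : y ∉ M) :
    ∃ f : StrongDual 𝕜 V, (∀ m ∈ M, f m = 0) ∧ f y ≠ 0 := by
  have : IsClosed (M : Set V) := hM
  have hne : (Submodule.Quotient.mk y : V ⧸ M) ≠ 0 := by
    rwa [Ne, Submodule.Quotient.mk_eq_zero]
  obtain ⟨g, -, hg⟩ := exists_dual_vector 𝕜 (Submodule.Quotient.mk y : V ⧸ M)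
    (norm_ne_zero_iff.2 hne)
  refine ⟨g.comp M.mkQL, ?_, ?_⟩
  · intro m hm
    have : M.mkQL m = 0 := (Submodule.Quotient.mk_eq_zero M).2 hm
    simp [this]
  · change g (Submodule.Quotient.mk y : V ⧸ M) ≠ 0
    rw [hg]
    simpa using hne

theorem rec_tendsto (T : V →L[𝕜] V) (α : 𝕜) (hα : ‖α‖ < 1)
    (y : V) (hy : T y - α • y ∈ stableSub T) : y ∈ stableSub T := by
  rw [mem_stableSub] at hy ⊢
  set r := ‖α‖ with hr
  have hr0 : 0 ≤ r := norm_nonneg _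
  rw [Metric.tendsto_atTop] at hy ⊢
  intro ε hε
  have h1r : 0 < 1 - r := by linarith
  obtain ⟨N, hN⟩ := hy ((1 - r) * (ε / 2)) (by positivity)
  have key : ∀ m : ℕ, ‖(T ^ (N + m)) y‖ ≤ r ^ m * ‖(T ^ N) y‖ + ε / 2 := by
    intro m
    induction m with
    | zero => simp; positivity
    | succ m ih =>
      have h1 := hN (N + m) (by omega)
      rw [dist_zero_right] at h1
      have h2 : (T ^ (N + (m + 1))) y = (T ^ (N + m)) (T y - α • y) + α • (T ^ (N + m)) y := by
        rw [← add_assoc, pow_succ, map_sub, map_smul, sub_add_cancel]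
        rfl
      rw [h2]
      calc _ ≤ ‖(T ^ (N + m)) (T y - α • y)‖ + r * ‖(T ^ (N + m)) y‖ :=
            (norm_add_le _ _).trans (by rw [norm_smul])
        _ ≤ (1 - r) * (ε / 2) + r * (r ^ m * ‖(T ^ N) y‖ + ε / 2) := by gcongr
        _ = _ := by ring
  have hlim : Tendsto (fun m : ℕ => r ^ m * ‖(T ^ N) y‖) atTop (nhds 0) := by
    simpa using (tendsto_pow_atTop_nhds_zero_of_lt_one hr0 hα).mul_const ‖(T ^ N) y‖
  obtain ⟨N', hN'⟩ := (hlim.eventually (gt_mem_nhds (by positivity : 0 < ε / 2))).exists_forall_of_atTop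
  refine ⟨N + N', fun n hn => ?_⟩
  obtain ⟨m, rfl⟩ := Nat.exists_eq_add_of_le (show N ≤ n by omega)
  rw [dist_zero_right]
  have := key m
  have := hN' m (by omega)
  linarith

theorem avg_contra (u : ℕ → ℝ) (δ : ℝ) (hδ : 0 < δ) (hu : ∀ n, δ ≤ u n)
    (h : Tendsto (fun n : ℕ => (∑ k ∈ Icc 1 n, u k) / n) atTop (nhds 0)) : False := by
  have : δ ≤ 0 := by
    refine ge_of_tendsto h ?_
    filter_upwards [eventually_gt_atTop 0] with n hn
    rw [le_div_iff₀ (by exact_mod_cast hn)]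
    calc δ * n = ∑ k ∈ Icc 1 n, δ := by simp [mul_comm]
      _ ≤ _ := sum_le_sum fun i _ => hu i
  linarith

theorem main_lemma (T E S : V →L[𝕜] V) (α : 𝕜) (C : ℝ) (hC : ∀ n : ℕ, ‖T ^ n‖ ≤ C)
    (hcomm : ∀ x, E (T x) = T (E x))
    (hT : ∀ x, T x = α • x + S x)
    (hwm : ∀ x : V, ∀ f : StrongDual 𝕜 V,
        Tendsto (fun n : ℕ => (∑ k ∈ Icc 1 n, ‖f ((T ^ k) (x - E x))‖) / n) atTop (nhds 0))
    (k : ℕ) (hk : ∀ x, (S ^ k) (x - E x) ∈ stableSub T) (x : V) :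
    x - E x ∈ stableSub T := by
  suffices h : ∀ x, (S ^ 0) (x - E x) ∈ stableSub T by simpa using h x
  clear x
  have hST : ∀ (j : ℕ) x, (S ^ j) (T x) = T ((S ^ j) x) := by
    intro j x
    rw [hT, hT, map_add, map_smul]
    congr 1
    change (S ^ j * S) x = (S * S ^ j) x
    rw [(Commute.pow_self S j).eq]
  induction k with
  | zero => exact hk
  | succ j ih =>
    refine ih fun x => ?_
    by_cases hα : ‖α‖ < 1
    · refine rec_tendsto T α hα _ ?_
      have := hk x
      rw [pow_succ'] at this
      rw [hT]
      simpa using this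
    · by_contra hx
      obtain ⟨f, hf, hfx⟩ := exists_sep _ (stableSub_closed T C hC) _ hx
      have h1 : ∀ z, f ((S ^ j) (T (z - E z))) = α * f ((S ^ j) (z - E z)) := by
        intro z
        have h0 := hf _ (hk z)
        rw [pow_succ] at h0
        rw [hT, map_add, map_add, map_smul, map_smul]
        have h0' : f ((S ^ j) (S (z - E z))) = 0 := h0
        rw [h0']; simp
      have hTE : ∀ (n : ℕ) , (T ^ n) (x - E x) = (T ^ n) x - E ((T ^ n) x) := by
        intro n
        induction n with
        | zero => simp
        | succ n ihn =>
          rw [pow_succ']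
          change T ((T ^ n) (x - E x)) = T ((T ^ n) x) - E (T ((T ^ n) x))
          rw [ihn, map_sub, hcomm]
      have h2 : ∀ n : ℕ, f ((S ^ j) ((T ^ n) (x - E x))) = α ^ n * f ((S ^ j) (x - E x)) := by
        intro n
        induction n with
        | zero => simp
        | succ n ihn =>
          rw [pow_succ']
          change f ((S ^ j) (T ((T ^ n) (x - E x)))) = _
          rw [hTE, h1, ← hTE, ihn]; ring
      refine avg_contra _ ‖f ((S ^ j) (x - E x))‖ (norm_pos_iff.2 hfx) ?_
        (hwm x (f.comp (S ^ j)))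
      intro n
      change _ ≤ ‖f ((S ^ j) ((T ^ n) (x - E x)))‖
      rw [h2, norm_mul, norm_pow]
      exact le_mul_of_one_le_left (norm_nonneg _) (one_le_pow₀ (not_lt.1 hα))

theorem compact_stable (T K : V →L[𝕜] V) (C : ℝ) (hC : ∀ n : ℕ, ‖T ^ n‖ ≤ C)
    (hK : IsCompactOperator K) (hcomm : ∀ x (n : ℕ), K ((T ^ n) x) = (T ^ n) (K x))
    (y : V) (hwm : ∀ f : StrongDual 𝕜 V,
        Tendsto (fun n : ℕ => (∑ k ∈ Icc 1 n, ‖f ((T ^ k) y)‖) / n) atTop (nhds 0)) :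
    K y ∈ stableSub T := by
  have hC0 : 0 ≤ C := (norm_nonneg _).trans (hC 0)
  rw [mem_stableSub]
  by_contra hnot
  -- the norms are bounded below
  have hlow : ∃ δ > 0, ∀ n : ℕ, δ ≤ ‖(T ^ n) (K y)‖ := by
    by_contra! h
    apply hnot
    rw [Metric.tendsto_atTop]
    intro ε hε
    obtain ⟨N, hN⟩ := h (ε / (C + 1)) (by positivity)
    refine ⟨N, fun n hn => ?_⟩
    obtain ⟨m, rfl⟩ := Nat.exists_eq_add_of_le hn
    rw [dist_zero_right, add_comm, pow_add]
    change ‖(T ^ m) ((T ^ N) (K y))‖ < ε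
    calc _ ≤ C * ‖(T ^ N) (K y)‖ := ((T ^ m).le_opNorm _).trans (by gcongr; exact hC m)
      _ ≤ (C + 1) * ‖(T ^ N) (K y)‖ := by gcongr; linarith
      _ < (C + 1) * (ε / (C + 1)) := by gcongr
      _ = ε := by field_simp
  obtain ⟨δ, hδ, hlow⟩ := hlow
  have hcpt := hK.isCompact_closure_image_closedBall (f := (K : V →ₗ[𝕜] V)) (C * ‖y‖)
  choose g hg1 hg2 using fun q : V => exists_dual_vector'' 𝕜 q
  have hQ : IsCompact (closure (K '' Metric.closedBall 0 (C * ‖y‖)) ∩ {z | δ ≤ ‖z‖}) :=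
    hcpt.inter_right (isClosed_le continuous_const continuous_norm)
  obtain ⟨t, -, ht⟩ := hQ.elim_nhds_subcover (fun q => {z | δ / 2 < ‖g q z‖}) (by
    intro q hq
    refine (isOpen_lt continuous_const (by fun_prop)).mem_nhds ?_
    have : δ ≤ ‖q‖ := hq.2
    simp [hg2]
    linarith)
  have hsum : Tendsto (fun n : ℕ =>
      (∑ k ∈ Icc 1 n, ∑ q ∈ t, ‖(g q).comp K ((T ^ k) y)‖) / n) atTop (nhds 0) := by
    have := tendsto_finsetSum t fun q _ => hwm ((g q).comp K)
    simp only [sum_const_zero] at this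
    refine this.congr fun n => ?_
    rw [← sum_div, sum_comm]
  refine avg_contra _ (δ / 2) (by positivity) ?_ hsum
  intro n
  have hmem : K ((T ^ n) y) ∈ closure (K '' Metric.closedBall 0 (C * ‖y‖)) ∩ {z | δ ≤ ‖z‖} := by
    refine ⟨subset_closure ⟨_, ?_, rfl⟩, ?_⟩
    · rw [mem_closedBall_zero_iff]
      exact ((T ^ n).le_opNorm _).trans (by gcongr; exact hC n)
    · rw [hcomm]; exact hlow n
  obtain ⟨q, hq, hq2⟩ := Set.mem_iUnion₂.1 (ht hmem)
  have hq3 : δ / 2 < ‖(g q).comp K ((T ^ n) y)‖ := hq2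
  exact hq3.le.trans (single_le_sum (f := fun q => ‖(g q).comp K ((T ^ n) y)‖)
    (fun _ _ => norm_nonneg _) hq)

theorem compact_unif (A : ℕ → V →L[𝕜] V) (K : V →L[𝕜] V) (C : ℝ) (hC : ∀ n : ℕ, ‖A n‖ ≤ C)
    (hK : IsCompactOperator K) (hA : ∀ x, Tendsto (fun n => A n x) atTop (nhds 0)) :
    Tendsto (fun n => ‖A n * K‖) atTop (nhds 0) := by
  have hC0 : 0 ≤ C := (norm_nonneg _).trans (hC 0)
  rw [Metric.tendsto_atTop]
  intro ε hε
  have hcpt := hK.isCompact_closure_image_closedBall (f := (K : V →ₗ[𝕜] V)) 1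
  obtain ⟨t, -, ht⟩ := hcpt.elim_nhds_subcover (fun q => Metric.ball q (ε / (4 * (C + 1))))
    (fun q _ => Metric.ball_mem_nhds _ (by positivity))
  have hev : ∀ᶠ n in atTop, ∀ q ∈ t, ‖A n q‖ < ε / 4 := by
    rw [eventually_all_finset]
    intro q _
    have := (hA q).norm
    rw [norm_zero] at this
    exact this.eventually (gt_mem_nhds (by positivity))
  obtain ⟨N, hN⟩ := hev.exists_forall_of_atTop
  refine ⟨N, fun n hn => ?_⟩
  rw [dist_zero_right, norm_norm]
  refine lt_of_le_of_lt (b := ε / 2) ?_ (by linarith)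
  refine ContinuousLinearMap.opNorm_le_of_unit_norm (by positivity) ?_
  intro x hx
  have hmem : K x ∈ closure (K '' Metric.closedBall 0 1) :=
    subset_closure ⟨x, by simpa using hx.le, rfl⟩
  obtain ⟨q, hq, hq2⟩ := Set.mem_iUnion₂.1 (ht hmem)
  rw [Metric.mem_ball, dist_eq_norm] at hq2
  have h1 := hN n hn q hq
  change ‖A n (K x)‖ ≤ _
  have h2 : ‖A n (K x - q)‖ ≤ ε / 4 := by
    calc _ ≤ C * ‖K x - q‖ := ((A n).le_opNorm _).trans (by gcongr; exact hC n)
      _ ≤ (C + 1) * (ε / (4 * (C + 1))) := by gcongr; linarith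
      _ = ε / 4 := by field_simp
  have h4 : A n (K x) = A n (K x - q) + A n q := by rw [map_sub]; abel
  rw [h4]
  exact (norm_add_le _ _).trans (by linarith)

theorem banachAdjoint_pow (T : V →L[𝕜] V) (n : ℕ) (f : StrongDual 𝕜 V) :
    (banachAdjoint T ^ n) f = f.comp (T ^ n) := by
  induction n with
  | zero => ext; simp
  | succ n ih =>
    rw [pow_succ', pow_succ]
    change banachAdjoint T ((banachAdjoint T ^ n) f) = _
    rw [ih]
    rfl

theorem TE_eq (T E : V →L[𝕜] V) (C : ℝ) (hC : ∀ n : ℕ, ‖T ^ n‖ ≤ C)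
    (hE : ∀ x : V, Tendsto (fun n : ℕ => (n : 𝕜)⁻¹ • ∑ k ∈ Icc 1 n, (T ^ k) x)
      atTop (nhds (E x))) (x : V) : T (E x) = E x ∧ E (T x) = T (E x) := by
  have h1 : Tendsto (fun n : ℕ => T ((n : 𝕜)⁻¹ • ∑ k ∈ Icc 1 n, (T ^ k) x)) atTop
      (nhds (T (E x))) := (T.continuous.tendsto _).comp (hE x)
  have h2 : E (T x) = T (E x) := by
    refine tendsto_nhds_unique (hE (T x)) (h1.congr fun n => ?_)
    rw [map_smul, map_sum]
    congr 1
    refine sum_congr rfl fun i _ => ?_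
    change (T * T ^ i) x = (T ^ i * T) x
    rw [(Commute.self_pow T i).eq]
  refine ⟨?_, h2⟩
  have h3 := h1.sub (hE x)
  have h4 : Tendsto (fun n : ℕ => T ((n : 𝕜)⁻¹ • ∑ k ∈ Icc 1 n, (T ^ k) x) -
      (n : 𝕜)⁻¹ • ∑ k ∈ Icc 1 n, (T ^ k) x) atTop (nhds 0) := by
    have hb : ∀ n : ℕ, T ((n : 𝕜)⁻¹ • ∑ k ∈ Icc 1 n, (T ^ k) x) -
      (n : 𝕜)⁻¹ • ∑ k ∈ Icc 1 n, (T ^ k) x = (n : 𝕜)⁻¹ • ((T ^ (n + 1)) x - T x) := by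
      intro n
      rw [map_smul, map_sum, ← smul_sub]
      congr 1
      induction n with
      | zero => simp
      | succ n ih =>
        rw [sum_Icc_succ_top (by omega), sum_Icc_succ_top (by omega), add_sub_add_comm, ih]
        have : T ((T ^ (n + 1)) x) = (T ^ (n + 1 + 1)) x := by rw [pow_succ' T (n + 1)]; rfl
        rw [this]; abel
    simp_rw [hb]
    have hz : Tendsto (fun n : ℕ => (n : ℝ)⁻¹ * (C * ‖x‖ + ‖T x‖)) atTop (nhds 0) := by
      simpa using (tendsto_inv_atTop_nhds_zero_nat (𝕜 := ℝ)).mul_const (C * ‖x‖ + ‖T x‖)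
    refine squeeze_zero_norm (fun n => ?_) hz
    rw [norm_smul, norm_inv, RCLike.norm_natCast]
    gcongr
    refine (norm_sub_le _ _).trans ?_
    gcongr
    exact ((T ^ (n + 1)).le_opNorm _).trans (by gcongr; exact hC _)
  exact sub_eq_zero.1 (tendsto_nhds_unique h3 h4)

end helpers

/-- Let `X` be a reflexive Banach space over `𝕜` (`ℝ` or `ℂ`), and let `T`
be a weakly mixing power-bounded operator with ergodic projection `E`. If `T = α·I + S` with
`S^k` compact for some `k ≥ 1`, then `T` and `T*` are stable. -/
theorem stable_of_weakMixing_scalar_plus_compact_power {𝕜 : Type*} [RCLike 𝕜]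
    {X : Type*} [NormedAddCommGroup X] [NormedSpace 𝕜 X] [CompleteSpace X]
    (hrefl : Function.Bijective (NormedSpace.inclusionInDoubleDual 𝕜 X))
    (T : X →L[𝕜] X) (hpb : ∃ C : ℝ, ∀ n : ℕ, ‖T ^ n‖ ≤ C)
    (E : X →L[𝕜] X)
    (hE : ∀ x : X, Tendsto (fun n : ℕ => (n : 𝕜)⁻¹ • ∑ k ∈ Icc 1 n, (T ^ k) x)
      atTop (nhds (E x)))
    (hwm : ∀ x : X, ∀ f : StrongDual 𝕜 X,
        Tendsto (fun n : ℕ => (∑ k ∈ Icc 1 n, ‖f ((T ^ k) (x - E x))‖) / n) atTop (nhds 0))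
    (α : 𝕜) (S : X →L[𝕜] X) (k : ℕ) (hk : 1 ≤ k)
    (hS : IsCompactOperator (S ^ k : X →L[𝕜] X))
    (hT : T = α • (1 : X →L[𝕜] X) + S) :
    (∀ x : X, Tendsto (fun n : ℕ => ‖(T ^ n) x - E x‖) atTop (nhds 0)) ∧
    (∀ f : StrongDual 𝕜 X,
        Tendsto (fun n : ℕ => ‖(banachAdjoint T ^ n) f - banachAdjoint E f‖)
          atTop (nhds 0)) := by
  obtain ⟨C, hC⟩ := hpb
  have hTE := fun x => (TE_eq T E C hC hE x).1
  have hET := fun x => (TE_eq T E C hC hE x).2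
  have hTE' : ∀ (n : ℕ) x, (T ^ n) (E x) = E x := by
    intro n x
    induction n with
    | zero => simp
    | succ n ih => rw [pow_succ]; change (T ^ n) (T (E x)) = _; rw [hTE, ih]
  have hET' : ∀ (n : ℕ) x, E ((T ^ n) x) = E x := by
    intro n x
    induction n with
    | zero => simp
    | succ n ih => rw [pow_succ']; change E (T ((T ^ n) x)) = _; rw [hET, hTE, ih]
  have hTx : ∀ x, T x = α • x + S x := by intro x; rw [hT]; simp
  have hcSn : ∀ n j : ℕ, S ^ j * T ^ n = T ^ n * S ^ j := by
    intro n j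
    have : Commute S T := by
      rw [hT]
      exact ((Commute.one_right S).smul_right α).add_right (Commute.refl S)
    exact (this.pow_pow j n).eq
  have hmain : ∀ x, x - E x ∈ stableSub T :=
    main_lemma T E S α C hC hET hTx hwm k (fun x =>
      compact_stable T (S ^ k) C hC hS
        (fun z n => congrArg (fun A : X →L[𝕜] X => A z) (hcSn n k)) _ (hwm x))
  have hconv : ∀ x, Tendsto (fun n : ℕ => (T ^ n - E) x) atTop (nhds 0) := by
    intro x
    have := (mem_stableSub T _).1 (hmain x)
    refine this.congr fun n => ?_
    rw [map_sub, hTE']; rfl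
  refine ⟨fun x => by simpa using (hconv x).norm, ?_⟩
  have hunif := compact_unif (fun n => T ^ n - E) (S ^ k) (C + ‖E‖)
    (fun n => (norm_sub_le _ _).trans (by gcongr; exact hC n)) hS hconv
  have hdual : ∀ f, f - banachAdjoint E f ∈ stableSub (banachAdjoint T) := by
    refine main_lemma (banachAdjoint T) (banachAdjoint E) (banachAdjoint S) α C ?_ ?_ ?_ ?_ k ?_
    · intro n
      have hC0 : 0 ≤ C := (norm_nonneg _).trans (hC 0)
      refine ContinuousLinearMap.opNorm_le_bound _ hC0 fun f => ?_
      rw [banachAdjoint_pow, mul_comm]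
      exact (f.opNorm_comp_le _).trans (by gcongr; exact hC n)
    · intro f
      ext x
      change f (T (E x)) = f (E (T x))
      rw [hET]
    · intro f
      ext x
      change f (T x) = α * f x + f (S x)
      rw [hTx]; simp
    · intro f F
      obtain ⟨x, rfl⟩ := hrefl.2 F
      refine (hwm x f).congr fun n => ?_
      congr 1
      refine sum_congr rfl fun i _ => ?_
      rw [banachAdjoint_pow, NormedSpace.dual_def]
      change _ = ‖f ((T ^ i) x) - f (E ((T ^ i) x))‖
      rw [hET', map_sub, map_sub, hTE']
    · intro f
      rw [mem_stableSub]
      have hz : Tendsto (fun n : ℕ => ‖f‖ * ‖(T ^ n - E) * S ^ k‖) atTop (nhds 0) := by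
        simpa using hunif.const_mul ‖f‖
      refine squeeze_zero_norm (fun n => ?_) hz
      have : (banachAdjoint T ^ n) ((banachAdjoint S ^ k) (f - banachAdjoint E f))
          = f.comp ((T ^ n - E) * S ^ k) := by
        rw [banachAdjoint_pow, banachAdjoint_pow]
        ext x
        change f ((S ^ k * T ^ n) x) - f (E ((S ^ k * T ^ n) x)) =
          f ((T ^ n) ((S ^ k) x) - E ((S ^ k) x))
        rw [hcSn]
        change f ((T ^ n) ((S ^ k) x)) - f (E ((T ^ n) ((S ^ k) x))) = _
        rw [hET', map_sub]
      rw [this]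
      exact f.opNorm_comp_le _
  intro f
  have := ((mem_stableSub _ _).1 (hdual f)).norm
  rw [norm_zero] at this
  refine this.congr fun n => ?_
  congr 1
  rw [banachAdjoint_pow, banachAdjoint_pow]
  ext x
  change f ((T ^ n) x) - f (E ((T ^ n) x)) = f ((T ^ n) x) - f (E x)
  rw [hET']
end
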